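/- arXiv:math/0607598 — 3 statements merged into one kernel-verified Lean document; each statement's English description precedes it below -/
import Mathlib

section
/- Let f be a quasiperiodically forced circle homeomorphism over an irrational ω with lift F whose fibered rotation number is 0, and suppose there exists an F-invariant strip. (i) If for some ε > 0 the fibered rotation number of F_ε equals 0, then there exist a continuous curve γ⁺ : T¹ → ℝ and an integer N ≥ 1 such that F^N_θ(γ⁺(θ)) < γ⁺(θ+Nω) for every θ, i.e. γ⁺ is mapped strictly below itself by the N-th iterate of F. (ii) If for some ε > 0 the fibered rotation number of F_{−ε} equals 0, then there exist a continuous curve γ⁻ : T¹ → ℝ and an integer N ≥ 1 such that F^N_θ(γ⁻(θ)) > γ⁻(θ+Nω) for every θ. -/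
open Filter Topology MeasureTheory
open scoped ENNReal

noncomputable section

/-- The circle `T¹ = ℝ/ℤ`. -/
abbrev T1 := AddCircle (1 : ℝ)

/-- Fiberwise iterate of the skew product: `fiberIter ω F n θ x = F^n_θ(x)`. -/
def fiberIter (ω : ℝ) (F : T1 → ℝ → ℝ) : ℕ → T1 → ℝ → ℝ
  | 0, _, x => x
  | n + 1, θ, x => fiberIter ω F n (θ + (ω : T1)) (F θ x)

/-- `F` is (the fiber part of) a lift of a quasiperiodically forced circle homeomorphism
over `ω`: `F(θ,x) = (θ+ω, F_θ(x))`, each `F_θ` a strictly increasing homeomorphism of `ℝ`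
commuting with `x ↦ x+1`. -/
structure IsQpfLift (ω : ℝ) (F : T1 → ℝ → ℝ) : Prop where
  cont : Continuous fun p : T1 × ℝ => F p.1 p.2
  mono : ∀ θ, StrictMono (F θ)
  surj : ∀ θ, Function.Surjective (F θ)
  per  : ∀ θ x, F θ (x + 1) = F θ x + 1

/-- `ρ` is the fibered rotation number of the lift `F`. -/
def HasRotNum (ω : ℝ) (F : T1 → ℝ → ℝ) (ρ : ℝ) : Prop :=
  ∀ θ x, Tendsto (fun n : ℕ => (fiberIter ω F n θ x - x) / n) atTop (𝓝 ρ)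

/-- The skew-product map on `T¹ × ℝ` induced by the (fiber part of the) lift. -/
def skew (ω : ℝ) (F : T1 → ℝ → ℝ) : T1 × ℝ → T1 × ℝ :=
  fun p => (p.1 + (ω : T1), F p.1 p.2)

/-- An `F`-invariant strip: a compact invariant set all of whose fibers are nonempty
compact intervals. -/
def IsInvStrip (ω : ℝ) (F : T1 → ℝ → ℝ) (A : Set (T1 × ℝ)) : Prop :=
  IsCompact A ∧ skew ω F '' A = A ∧
    ∀ θ : T1, ∃ a b : ℝ, a ≤ b ∧ {x : ℝ | (θ, x) ∈ A} = Set.Icc a b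

/-- Graph transform. -/
def push (ω : ℝ) (F : T1 → ℝ → ℝ) (h : T1 → ℝ) : T1 → ℝ :=
  fun θ => F (θ - (ω : T1)) (h (θ - (ω : T1)))

lemma fiberIter_push (ω : ℝ) (F : T1 → ℝ → ℝ) (n : ℕ) : ∀ (h : T1 → ℝ) (θ : T1),
    fiberIter ω F n θ (h θ) = (push ω F)^[n] h (θ + n • (ω : T1)) := by
  induction n with
  | zero => intro h θ; simp [fiberIter]
  | succ n ih =>
    intro h θ
    have h1 : F θ (h θ) = push ω F h (θ + (ω : T1)) := by simp [push]
    rw [fiberIter, h1, ih (push ω F h), Function.iterate_succ_apply, succ_nsmul',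
      add_assoc]

lemma fiberIter_strictMono (ω : ℝ) (F : T1 → ℝ → ℝ) (hF : IsQpfLift ω F) (n : ℕ) :
    ∀ θ, StrictMono (fiberIter ω F n θ) := by
  induction n with
  | zero => intro θ x y h; simpa [fiberIter] using h
  | succ n ih => intro θ x y h; exact ih _ (hF.mono θ h)

lemma push_mono {ω : ℝ} {F : T1 → ℝ → ℝ} (hF : IsQpfLift ω F) : Monotone (push ω F) := by
  intro g h hgh θ
  exact (hF.mono _).monotone (hgh _)

lemma exists_hit {ω : ℝ} (hω : Irrational ω) {U : Set T1} (hU : IsOpen U) (hne : U.Nonempty)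
    (θ : T1) : ∃ n : ℕ, θ - n • (ω : T1) ∈ U := by
  have hd : DenseRange (fun n : ℕ => n • (ω : T1)) := by
    rw [← denseRange_zsmul_iff_nsmul, AddCircle.denseRange_zsmul_coe_iff]
    simpa using hω
  have hc : Continuous fun x : T1 => θ - x := by fun_prop
  obtain ⟨u, hu⟩ := hne
  obtain ⟨n, hn⟩ := hd.exists_mem_open (hU.preimage hc) ⟨θ - u, by simpa using hu⟩
  exact ⟨n, hn⟩

/-- lower semicontinuity is preserved by the graph transform -/
lemma push_lsc {ω : ℝ} {F : T1 → ℝ → ℝ} (hF : IsQpfLift ω F) {h : T1 → ℝ}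
    (hh : ∀ θ c, c < h θ → ∀ᶠ y in 𝓝 θ, c < h y) :
    ∀ θ c, c < push ω F h θ → ∀ᶠ y in 𝓝 θ, c < push ω F h y := by
  intro θ c hc
  have ht : Tendsto (fun y : T1 => y - (ω : T1)) (𝓝 θ) (𝓝 (θ - (ω : T1))) :=
    (continuous_id.sub continuous_const).tendsto θ
  have h1 : ∀ᶠ d in 𝓝 (h (θ - (ω : T1))), c < F (θ - (ω : T1)) d :=
    (hF.cont.comp (Continuous.prodMk_right (θ - (ω : T1)))).continuousAt.eventually
      (lt_mem_nhds hc)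
  obtain ⟨d, hd1, hd2⟩ := ((h1.filter_mono nhdsWithin_le_nhds).and
    (self_mem_nhdsWithin : Set.Iio (h (θ - (ω : T1))) ∈ 𝓝[<] (h (θ - (ω : T1))))).exists
  have h2 : ∀ᶠ y in 𝓝 (θ - (ω : T1)), c < F y d :=
    (hF.cont.comp (Continuous.prodMk_left d)).continuousAt.eventually (lt_mem_nhds hd1)
  filter_upwards [ht.eventually h2, ht.eventually (hh _ _ hd2)] with y hy1 hy2
  exact hy1.trans (hF.mono _ hy2)

lemma push_usc {ω : ℝ} {F : T1 → ℝ → ℝ} (hF : IsQpfLift ω F) {h : T1 → ℝ}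
    (hh : ∀ θ c, h θ < c → ∀ᶠ y in 𝓝 θ, h y < c) :
    ∀ θ c, push ω F h θ < c → ∀ᶠ y in 𝓝 θ, push ω F h y < c := by
  intro θ c hc
  have ht : Tendsto (fun y : T1 => y - (ω : T1)) (𝓝 θ) (𝓝 (θ - (ω : T1))) :=
    (continuous_id.sub continuous_const).tendsto θ
  have h1 : ∀ᶠ d in 𝓝 (h (θ - (ω : T1))), F (θ - (ω : T1)) d < c :=
    (hF.cont.comp (Continuous.prodMk_right (θ - (ω : T1)))).continuousAt.eventually
      (gt_mem_nhds hc)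
  obtain ⟨d, hd1, hd2⟩ := ((h1.filter_mono nhdsWithin_le_nhds).and
    (self_mem_nhdsWithin : Set.Ioi (h (θ - (ω : T1))) ∈ 𝓝[>] (h (θ - (ω : T1))))).exists
  have h2 : ∀ᶠ y in 𝓝 (θ - (ω : T1)), F y d < c :=
    (hF.cont.comp (Continuous.prodMk_left d)).continuousAt.eventually (gt_mem_nhds hd1)
  filter_upwards [ht.eventually h2, ht.eventually (hh _ _ hd2)] with y hy1 hy2
  exact (hF.mono _ hy2).trans hy1

lemma IsQpfLift.add_const {ω : ℝ} {F : T1 → ℝ → ℝ} (hF : IsQpfLift ω F) (ε : ℝ) :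
    IsQpfLift ω (fun θ x => F θ x + ε) where
  cont := hF.cont.add continuous_const
  mono := fun θ x y h => by have := hF.mono θ h; simpa using this
  surj := fun θ y => by
    obtain ⟨x, hx⟩ := hF.surj θ (y - ε)
    exact ⟨x, by simp [hx]⟩
  per := fun θ x => by rw [hF.per]; ring

lemma per_nat {ω : ℝ} {F : T1 → ℝ → ℝ} (hF : IsQpfLift ω F) (θ : T1) (x : ℝ) (k : ℕ) :
    F θ (x + k) = F θ x + k := by
  induction k with
  | zero => simp
  | succ k ih => push_cast; rw [← add_assoc, hF.per, ih, add_assoc]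

lemma push_iter_add {ω : ℝ} {F : T1 → ℝ → ℝ} (hF : IsQpfLift ω F) (k n : ℕ) :
    ∀ h : T1 → ℝ, (push ω F)^[n] (fun θ => h θ + k) = fun θ => (push ω F)^[n] h θ + k := by
  induction n with
  | zero => intro h; rfl
  | succ n ih =>
    intro h
    have : push ω F (fun θ => h θ + k) = fun θ => push ω F h θ + k := by
      funext θ; exact per_nat hF _ _ _
    rw [Function.iterate_succ_apply, this, ih, Function.iterate_succ_apply]

/-- Zero rotation number forces uniform bounds on the upward moving lower boundary. -/
lemma push_bounded {ω : ℝ} (hω : Irrational ω) {G : T1 → ℝ → ℝ} (hG : IsQpfLift ω G)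
    (hρ : HasRotNum ω G 0) {φ : T1 → ℝ} {m M : ℝ} (hm : ∀ θ, m ≤ φ θ) (hM : ∀ θ, φ θ ≤ M)
    (hφ : ∀ θ c, c < φ θ → ∀ᶠ y in 𝓝 θ, c < φ y) (hup : φ ≤ push ω G φ) (n : ℕ) (θ : T1) :
    (push ω G)^[n] φ θ ≤ M + 1 := by
  by_contra hcon
  push Not at hcon
  have hlsc : ∀ n : ℕ, ∀ θ c, c < (push ω G)^[n] φ θ →
      ∀ᶠ y in 𝓝 θ, c < (push ω G)^[n] φ y := by
    intro n
    induction n with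
    | zero => exact hφ
    | succ n ih => rw [Function.iterate_succ']; exact push_lsc hG ih
  have hmonoN : Monotone (fun n : ℕ => (push ω G)^[n] φ) := by
    refine monotone_nat_of_le_succ fun n => ?_
    rw [Function.iterate_succ_apply]
    exact (push_mono hG).iterate n hup
  let U : Set T1 := {θ | M + 1 < (push ω G)^[n] φ θ}
  have hU : IsOpen U := isOpen_iff_mem_nhds.2 fun θ h => hlsc n θ _ h
  have hUj : ∀ j : ℕ, ∀ θ, θ - j • (ω : T1) ∈ U → φ θ + 1 ≤ (push ω G)^[n + j] φ θ := by
    intro j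
    induction j with
    | zero =>
      intro θ h
      have h' : M + 1 < (push ω G)^[n] φ θ := by simpa [U] using h
      have := hM θ
      simp only [add_zero]
      linarith
    | succ j ih =>
      intro θ h
      have h1 := ih (θ - (ω : T1)) (by
        rw [succ_nsmul'] at h; rwa [sub_sub])
      rw [← add_assoc, Function.iterate_succ_apply']
      have h2 : G (θ - (ω : T1)) (φ (θ - (ω : T1)) + 1) ≤
          push ω G ((push ω G)^[n + j] φ) θ := (hG.mono _).monotone h1
      rw [hG.per] at h2
      have h3 : φ θ ≤ G (θ - (ω : T1)) (φ (θ - (ω : T1))) := hup θ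
      linarith
  obtain ⟨J, hJ⟩ : ∃ J : Finset ℕ, (Set.univ : Set T1) ⊆
      ⋃ j ∈ J, (fun θ : T1 => θ - j • (ω : T1)) ⁻¹' U := by
    refine isCompact_univ.elim_finite_subcover _ (fun j => hU.preimage (by fun_prop)) ?_
    intro θ' _
    obtain ⟨j, hj⟩ := exists_hit hω hU ⟨θ, hcon⟩ θ'
    exact Set.mem_iUnion.2 ⟨j, hj⟩
  obtain ⟨L, hL1, hL⟩ : ∃ L : ℕ, 1 ≤ L ∧ ∀ θ, φ θ + 1 ≤ (push ω G)^[L] φ θ := by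
    refine ⟨n + J.sup id + 1, by omega, fun θ' => ?_⟩
    obtain ⟨j, hjJ, hj⟩ := Set.mem_iUnion₂.1 (hJ (Set.mem_univ θ'))
    refine (hUj j θ' hj).trans (hmonoN ?_ θ')
    have : j ≤ J.sup id := Finset.le_sup (f := id) hjJ
    omega
  have hk : ∀ k : ℕ, ∀ θ, φ θ + k ≤ (push ω G)^[L * k] φ θ := by
    intro k
    induction k with
    | zero => intro θ; simp
    | succ k ih =>
      intro θ
      have h1 : (push ω G)^[L] (fun θ => φ θ + k) ≤ (push ω G)^[L] ((push ω G)^[L * k] φ) :=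
        (push_mono hG).iterate L ih
      rw [push_iter_add hG, ← Function.iterate_add_apply] at h1
      have h2 : (push ω G)^[L] φ θ + k ≤ (push ω G)^[L + L * k] φ θ := h1 θ
      have h3 := hL θ
      have h4 : L * (k + 1) = L + L * k := by ring
      rw [h4]
      push_cast
      linarith
  have hLpos : (0 : ℝ) < L := by exact_mod_cast hL1
  have ht := hρ θ (φ θ)
  have hsub : Tendsto (fun k : ℕ => L * k) atTop atTop :=
    tendsto_id.const_mul_atTop' (by omega)
  have hev := (ht.comp hsub).eventually (gt_mem_nhds (show (0 : ℝ) < 1 / (2 * L) by positivity))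
  obtain ⟨k, hk1, hk2⟩ := (hev.and (eventually_ge_atTop (⌈2 * (M - m)⌉₊ + 1))).exists
  have hkR : 2 * (M - m) + 1 ≤ (k : ℝ) := by
    have h1 : ((⌈2 * (M - m)⌉₊ + 1 : ℕ) : ℝ) ≤ k := by exact_mod_cast hk2
    push_cast at h1
    linarith [Nat.le_ceil (2 * (M - m))]
  have hkpos : (0 : ℝ) < k := by
    have : 1 ≤ k := by omega
    exact_mod_cast this
  simp only [Function.comp_apply, fiberIter_push] at hk1
  rw [div_lt_div_iff₀ (by push_cast; positivity) (by positivity)] at hk1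
  have h5 := hk k (θ + (L * k) • (ω : T1))
  have h6 := hm (θ + (L * k) • (ω : T1))
  have h7 := hM θ
  push_cast at hk1
  have h8 : (k : ℝ) / 2 ≤ (push ω G)^[L * k] φ (θ + (L * k) • (ω : T1)) - φ θ := by linarith
  nlinarith [mul_le_mul_of_nonneg_right h8 (by positivity : (0 : ℝ) ≤ 2 * L)]

lemma strip_lower {ω : ℝ} {F : T1 → ℝ → ℝ} {A : Set (T1 × ℝ)} (hA : IsInvStrip ω F A) :
    ∃ (φ : T1 → ℝ) (m M : ℝ), (∀ θ, m ≤ φ θ) ∧ (∀ θ, φ θ ≤ M) ∧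
      (∀ θ c, c < φ θ → ∀ᶠ y in 𝓝 θ, c < φ y) ∧ φ ≤ push ω F φ := by
  obtain ⟨hc, hinv, hfib⟩ := hA
  choose a b hab hfib using hfib
  have hmem : ∀ θ, (θ, a θ) ∈ A := by
    intro θ
    have : a θ ∈ {x : ℝ | (θ, x) ∈ A} := by rw [hfib]; exact ⟨le_rfl, hab θ⟩
    exact this
  have hle : ∀ θ x, (θ, x) ∈ A → a θ ≤ x := by
    intro θ x hx
    have : x ∈ {x : ℝ | (θ, x) ∈ A} := hx
    rw [hfib] at this
    exact this.1
  have hb := (hc.image continuous_snd).isBounded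
  obtain ⟨m, hm⟩ := hb.bddBelow
  obtain ⟨M, hM⟩ := hb.bddAbove
  refine ⟨a, m, M, fun θ => hm ⟨_, hmem θ, rfl⟩, fun θ => hM ⟨_, hmem θ, rfl⟩, ?_, ?_⟩
  · intro θ c hlt
    have hcl : IsClosed (Prod.fst '' (A ∩ {p : T1 × ℝ | p.2 ≤ c})) :=
      ((hc.inter_right (isClosed_le continuous_snd continuous_const)).image
        continuous_fst).isClosed
    have hn : θ ∈ (Prod.fst '' (A ∩ {p : T1 × ℝ | p.2 ≤ c}))ᶜ := by
      rintro ⟨⟨θ', x⟩, ⟨h1, h2⟩, rfl⟩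
      exact absurd (hlt.trans_le (hle _ _ h1)) (not_lt.2 h2)
    filter_upwards [hcl.isOpen_compl.mem_nhds hn] with y hy
    by_contra hcon
    exact hy ⟨(y, a y), ⟨hmem y, not_lt.1 hcon⟩, rfl⟩
  · intro θ
    apply hle
    rw [← hinv]
    exact ⟨_, hmem (θ - (ω : T1)), by simp [skew, push]⟩

lemma exists_psi {ω : ℝ} (hω : Irrational ω) {G : T1 → ℝ → ℝ} (hG : IsQpfLift ω G)
    (hρ : HasRotNum ω G 0) {φ : T1 → ℝ} {m M : ℝ} (hm : ∀ θ, m ≤ φ θ) (hM : ∀ θ, φ θ ≤ M)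
    (hφ : ∀ θ c, c < φ θ → ∀ᶠ y in 𝓝 θ, c < φ y) (hup : φ ≤ push ω G φ) :
    ∃ ψ : T1 → ℝ, (∀ θ, m ≤ ψ θ) ∧ (∀ θ, ψ θ ≤ M + 1) ∧
      (∀ θ c, c < ψ θ → ∀ᶠ y in 𝓝 θ, c < ψ y) ∧ push ω G ψ ≤ ψ := by
  have hbd := push_bounded hω hG hρ hm hM hφ hup
  have hlsc : ∀ n : ℕ, ∀ θ c, c < (push ω G)^[n] φ θ →
      ∀ᶠ y in 𝓝 θ, c < (push ω G)^[n] φ y := by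
    intro n
    induction n with
    | zero => exact hφ
    | succ n ih => rw [Function.iterate_succ']; exact push_lsc hG ih
  have hmonoN : Monotone (fun n : ℕ => (push ω G)^[n] φ) := by
    refine monotone_nat_of_le_succ fun n => ?_
    rw [Function.iterate_succ_apply]
    exact (push_mono hG).iterate n hup
  have hBA : ∀ θ, BddAbove (Set.range fun n : ℕ => (push ω G)^[n] φ θ) := by
    intro θ
    exact ⟨M + 1, by rintro _ ⟨n, rfl⟩; exact hbd n θ⟩
  refine ⟨fun θ => ⨆ n : ℕ, (push ω G)^[n] φ θ, ?_, ?_, ?_, ?_⟩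
  · intro θ
    exact (hm θ).trans (le_ciSup (hBA θ) 0)
  · intro θ
    exact ciSup_le fun n => hbd n θ
  · intro θ c hc
    obtain ⟨n, hn⟩ := exists_lt_of_lt_ciSup hc
    filter_upwards [hlsc n θ c hn] with y hy
    exact hy.trans_le (le_ciSup (hBA y) n)
  · intro θ
    have h1 : Tendsto (fun n : ℕ => (push ω G)^[n] φ (θ - (ω : T1))) atTop
        (𝓝 (⨆ n : ℕ, (push ω G)^[n] φ (θ - (ω : T1)))) :=
      tendsto_atTop_ciSup (fun i j hij => hmonoN hij _) (hBA _)
    have h2 := ((hG.cont.comp (Continuous.prodMk_right (θ - (ω : T1)))).tendsto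
      (⨆ n : ℕ, (push ω G)^[n] φ (θ - (ω : T1)))).comp h1
    refine le_of_tendsto' h2 fun n => ?_
    have h3 := le_ciSup (hBA θ) (n + 1)
    simp only [Function.iterate_succ_apply'] at h3
    exact h3

/-- upper semicontinuous hull -/
lemma exists_hull {ω : ℝ} {G : T1 → ℝ → ℝ} (hG : IsQpfLift ω G) {ψ : T1 → ℝ} {m S : ℝ}
    (hm : ∀ θ, m ≤ ψ θ) (hS : ∀ θ, ψ θ ≤ S) (hinv : push ω G ψ ≤ ψ) :
    ∃ g : T1 → ℝ, ψ ≤ g ∧ (∀ S', (∀ θ, ψ θ ≤ S') → ∀ θ, g θ ≤ S') ∧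
      (∀ θ c, g θ < c → ∀ᶠ y in 𝓝 θ, g y < c) ∧ push ω G g ≤ g := by
  let E : T1 → Set ℝ := fun θ => {c | ∀ᶠ y in 𝓝 θ, ψ y ≤ c}
  have hEb : ∀ θ, BddBelow (E θ) := fun θ => ⟨ψ θ, fun c hc => hc.self_of_nhds⟩
  have hEn : ∀ θ, (E θ).Nonempty := fun θ => ⟨S, Eventually.of_forall hS⟩
  have hlt : ∀ θ c, sInf (E θ) < c → ∃ d < c, ∀ᶠ y in 𝓝 θ, ψ y ≤ d := by
    intro θ c hc
    obtain ⟨d, hd, hdc⟩ := exists_lt_of_csInf_lt (hEn θ) hc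
    exact ⟨d, hdc, hd⟩
  refine ⟨fun θ => sInf (E θ), ?_, ?_, ?_, ?_⟩
  · intro θ
    exact le_csInf (hEn θ) fun c hc => hc.self_of_nhds
  · intro S' hS' θ
    exact csInf_le (hEb θ) (Eventually.of_forall hS')
  · intro θ c hc
    obtain ⟨d, hdc, hd⟩ := hlt θ c hc
    filter_upwards [hd.eventually_nhds] with y hy
    exact (csInf_le (hEb y) hy).trans_lt hdc
  · intro θ
    by_contra hcon
    simp only [push] at hcon
    push Not at hcon
    obtain ⟨c, hc, hcE⟩ := hlt θ _ hcon
    have h1 : ∀ᶠ d in 𝓝 (sInf (E (θ - (ω : T1)))), c < G (θ - (ω : T1)) d :=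
      (hG.cont.comp (Continuous.prodMk_right (θ - (ω : T1)))).continuousAt.eventually
        (lt_mem_nhds hc)
    obtain ⟨d, hd1, hd2⟩ := ((h1.filter_mono nhdsWithin_le_nhds).and
      (self_mem_nhdsWithin : Set.Iio (sInf (E (θ - (ω : T1)))) ∈ 𝓝[<] _)).exists
    have h2 : ∀ᶠ y in 𝓝 (θ - (ω : T1)), c < G y d :=
      (hG.cont.comp (Continuous.prodMk_left d)).continuousAt.eventually (lt_mem_nhds hd1)
    have ht : Tendsto (fun y : T1 => y + (ω : T1)) (𝓝 (θ - (ω : T1))) (𝓝 θ) := by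
      have hcont : Continuous fun y : T1 => y + (ω : T1) := by fun_prop
      have := hcont.tendsto (θ - (ω : T1))
      rwa [sub_add_cancel] at this
    have h3 : d ∈ E (θ - (ω : T1)) := by
      filter_upwards [h2, ht.eventually hcE] with y hy1 hy2
      by_contra hyd
      push Not at hyd
      have h4 : G y (ψ y) ≤ ψ (y + (ω : T1)) := by
        have := hinv (y + (ω : T1))
        simpa [push] using this
      have h5 := hG.mono y hyd
      linarith
    exact absurd (csInf_le (hEb _) h3) (not_le.2 hd2)

lemma upper_half (ω : ℝ) (hω : Irrational ω)
    (F : T1 → ℝ → ℝ) (hF : IsQpfLift ω F)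
    (hstrip : ∃ A : Set (T1 × ℝ), IsInvStrip ω F A)
    (hε : ∃ ε : ℝ, 0 < ε ∧ HasRotNum ω (fun θ x => F θ x + ε) 0) :
      ∃ (γp : T1 → ℝ) (N : ℕ), Continuous γp ∧ 1 ≤ N ∧
        ∀ θ, fiberIter ω F N θ (γp θ) < γp (θ + N • (ω : T1)) := by
  obtain ⟨A, hA⟩ := hstrip
  obtain ⟨ε, hε, hρ⟩ := hε
  have hG := hF.add_const ε
  obtain ⟨φ, m, M, hm, hM, hφ, hup⟩ := strip_lower hA
  obtain ⟨ψ, hψm, hψM, hψ, hψinv⟩ := exists_psi hω hG hρ hm hM hφ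
    (fun θ => (hup θ).trans (by simp only [push]; linarith))
  obtain ⟨g, hψg, hgS, hg, hginv⟩ := exists_hull hG hψm hψM hψinv
  have hψF : ∀ θ, F (θ - (ω : T1)) (ψ (θ - (ω : T1))) + ε ≤ ψ θ := hψinv
  have hgF : ∀ θ, push ω F g θ + ε ≤ g θ := hginv
  have hgdec : push ω F g ≤ g := fun θ => by linarith [hgF θ]
  have hanti : Antitone (fun n : ℕ => (push ω F)^[n] g) := by
    refine antitone_nat_of_succ_le fun n => ?_
    rw [Function.iterate_succ_apply]
    exact (push_mono hF).iterate n hgdec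
  have husc : ∀ n : ℕ, ∀ θ c, (push ω F)^[n] g θ < c →
      ∀ᶠ y in 𝓝 θ, (push ω F)^[n] g y < c := by
    intro n
    induction n with
    | zero => exact hg
    | succ n ih => rw [Function.iterate_succ']; exact push_usc hF ih
  -- good sets are open
  let V : ℕ → Set T1 := fun n => {θ | (push ω F)^[n] g θ < ψ θ}
  have hV : ∀ n, IsOpen (V n) := by
    intro n
    refine isOpen_iff_mem_nhds.2 fun θ h => ?_
    obtain ⟨c, hc1, hc2⟩ := exists_between (show (push ω F)^[n] g θ < ψ θ from h)
    filter_upwards [husc n θ c hc1, hψ θ c hc2] with y h1 h2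
    exact h1.trans h2
  have hVstep : ∀ n θ, θ - (ω : T1) ∈ V n → θ ∈ V (n + 1) := by
    intro n θ h
    change (push ω F)^[n + 1] g θ < ψ θ
    rw [Function.iterate_succ_apply']
    have h1 : push ω F ((push ω F)^[n] g) θ < F (θ - (ω : T1)) (ψ (θ - (ω : T1))) :=
      hF.mono _ h
    linarith [hψF θ]
  have hVj : ∀ j n θ, θ - j • (ω : T1) ∈ V n → θ ∈ V (n + j) := by
    intro j
    induction j with
    | zero => intro n θ h; simpa using h
    | succ j ih =>
      intro n θ h
      rw [← add_assoc]
      apply hVstep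
      apply ih
      rw [succ_nsmul'] at h
      rwa [sub_sub]
  have hV1 : (V 1).Nonempty := by
    by_contra hcon
    rw [Set.not_nonempty_iff_eq_empty] at hcon
    have h1 : ∀ θ, ψ θ ≤ push ω F g θ := by
      intro θ
      by_contra h
      push Not at h
      have : θ ∈ V 1 := h
      rw [hcon] at this
      exact this
    have hBA : BddAbove (Set.range ψ) := ⟨M + 1, by rintro _ ⟨θ, rfl⟩; exact hψM θ⟩
    have h2 := hgS (⨆ θ, ψ θ) (fun θ => le_ciSup hBA θ)
    have h3 : (⨆ θ, ψ θ) ≤ (⨆ θ, ψ θ) - ε :=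
      ciSup_le fun θ => by linarith [h1 θ, hgF θ, h2 θ]
    linarith
  obtain ⟨J, hJ⟩ : ∃ J : Finset ℕ, (Set.univ : Set T1) ⊆ ⋃ j ∈ J, V j := by
    refine isCompact_univ.elim_finite_subcover _ hV ?_
    intro θ' _
    obtain ⟨j, hj⟩ := exists_hit hω (hV 1) hV1 θ'
    exact Set.mem_iUnion.2 ⟨1 + j, hVj j 1 θ' hj⟩
  obtain ⟨N, hN1, hN⟩ : ∃ N : ℕ, 1 ≤ N ∧ ∀ θ, (push ω F)^[N] g θ < ψ θ := by
    refine ⟨J.sup id + 1, by omega, fun θ => ?_⟩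
    obtain ⟨j, hjJ, hj⟩ := Set.mem_iUnion₂.1 (hJ (Set.mem_univ θ))
    refine lt_of_le_of_lt (hanti ?_ θ) hj
    have : j ≤ J.sup id := Finset.le_sup (f := id) hjJ
    omega
  obtain ⟨γ, hγ⟩ := exists_continuous_forall_mem_convex_of_local_const
    (t := fun θ : T1 => Set.Ioo ((push ω F)^[N] g θ) (ψ θ)) (fun θ => convex_Ioo _ _)
    (fun θ => by
      obtain ⟨c, hc1, hc2⟩ := exists_between (hN θ)
      refine ⟨c, ?_⟩
      filter_upwards [husc N θ c hc1, hψ θ c hc2] with y h1 h2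
      exact ⟨h1, h2⟩)
  refine ⟨γ, N, γ.continuous, hN1, fun θ => ?_⟩
  have h1 : fiberIter ω F N θ (γ θ) < fiberIter ω F N θ (g θ) :=
    fiberIter_strictMono ω F hF N θ ((hγ θ).2.trans_le (hψg θ))
  rw [fiberIter_push ω F N g] at h1
  exact h1.trans (hγ _).1

lemma fiberIter_neg (ω : ℝ) (F : T1 → ℝ → ℝ) (n : ℕ) : ∀ θ x,
    fiberIter ω (fun θ x => -F θ (-x)) n θ x = -fiberIter ω F n θ (-x) := by
  induction n with
  | zero => intro θ x; simp [fiberIter]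
  | succ n ih => intro θ x; simp only [fiberIter]; rw [ih, neg_neg]

lemma IsQpfLift.neg {ω : ℝ} {F : T1 → ℝ → ℝ} (hF : IsQpfLift ω F) :
    IsQpfLift ω (fun θ x => -F θ (-x)) where
  cont := (hF.cont.comp (continuous_fst.prodMk continuous_snd.neg)).neg
  mono := fun θ x y h => neg_lt_neg (hF.mono θ (neg_lt_neg h))
  surj := fun θ y => by
    obtain ⟨x, hx⟩ := hF.surj θ (-y)
    exact ⟨-x, by simp [hx]⟩
  per := fun θ x => by
    have h := hF.per θ (-(x + 1))
    have h2 : -(x + 1) + 1 = -x := by ring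
    rw [h2] at h
    linarith

lemma HasRotNum.neg {ω : ℝ} {F : T1 → ℝ → ℝ} (h : HasRotNum ω F 0) :
    HasRotNum ω (fun θ x => -F θ (-x)) 0 := by
  intro θ x
  have h1 := (h θ (-x)).neg
  rw [neg_zero] at h1
  refine h1.congr fun n => ?_
  rw [fiberIter_neg]
  ring

lemma IsInvStrip.neg {ω : ℝ} {F : T1 → ℝ → ℝ} {A : Set (T1 × ℝ)} (hA : IsInvStrip ω F A) :
    IsInvStrip ω (fun θ x => -F θ (-x)) ((fun p : T1 × ℝ => (p.1, -p.2)) '' A) := by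
  obtain ⟨hc, hinv, hfib⟩ := hA
  refine ⟨hc.image (by fun_prop), ?_, ?_⟩
  · conv_rhs => rw [← hinv]
    rw [Set.image_image, Set.image_image]
    refine Set.image_congr fun p _ => ?_
    simp [skew]
  · intro θ
    obtain ⟨a, b, hab, h⟩ := hfib θ
    refine ⟨-b, -a, neg_le_neg hab, ?_⟩
    ext x
    have hx : (θ, -x) ∈ A ↔ -x ∈ Set.Icc a b := by rw [← h]; rfl
    have h1 : (θ, x) ∈ (fun p : T1 × ℝ => (p.1, -p.2)) '' A ↔ (θ, -x) ∈ A := by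
      constructor
      · rintro ⟨⟨θ', y⟩, hy, he⟩
        simp only [Prod.mk.injEq] at he
        obtain ⟨rfl, rfl⟩ := he
        simpa using hy
      · intro hy
        exact ⟨_, hy, by simp⟩
    change (θ, x) ∈ (fun p : T1 × ℝ => (p.1, -p.2)) '' A ↔ _
    rw [h1, hx, Set.mem_Icc, Set.mem_Icc]
    constructor
    · rintro ⟨h1, h2⟩; constructor <;> linarith
    · rintro ⟨h1, h2⟩; constructor <;> linarith

/-- Proposition 4.1: one-sided locking of the rotation number at `0`
produces a continuous curve mapped strictly below (resp. strictly above) itself by some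
iterate of `F`. -/
theorem one_sided_locking_curves
    (ω : ℝ) (hω : Irrational ω)
    (F : T1 → ℝ → ℝ) (hF : IsQpfLift ω F)
    (hρ : HasRotNum ω F 0)
    (hstrip : ∃ A : Set (T1 × ℝ), IsInvStrip ω F A) :
    ((∃ ε : ℝ, 0 < ε ∧ HasRotNum ω (fun θ x => F θ x + ε) 0) →
      ∃ (γp : T1 → ℝ) (N : ℕ), Continuous γp ∧ 1 ≤ N ∧
        ∀ θ, fiberIter ω F N θ (γp θ) < γp (θ + N • (ω : T1))) ∧
    ((∃ ε : ℝ, 0 < ε ∧ HasRotNum ω (fun θ x => F θ x + (-ε)) 0) →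
      ∃ (γm : T1 → ℝ) (N : ℕ), Continuous γm ∧ 1 ≤ N ∧
        ∀ θ, γm (θ + N • (ω : T1)) < fiberIter ω F N θ (γm θ)) := by
  refine ⟨fun h => upper_half ω hω F hF hstrip h, ?_⟩
  rintro ⟨ε, hε, hr⟩
  obtain ⟨A, hA⟩ := hstrip
  have hr' : HasRotNum ω (fun θ x => -F θ (-x) + ε) 0 := by
    have h := hr.neg
    have he : (fun (θ : T1) (x : ℝ) => -(F θ (-x) + -ε)) = fun θ x => -F θ (-x) + ε := by
      funext θ x; ring
    rwa [he] at h
  obtain ⟨γ, N, hγ, hN, h⟩ := upper_half ω hω _ hF.neg ⟨_, hA.neg⟩ ⟨ε, hε, hr'⟩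
  refine ⟨fun θ => -γ θ, N, hγ.neg, hN, fun θ => ?_⟩
  have h1 := h θ
  rw [fiberIter_neg] at h1
  linarith
end
end

section
/- Let f be a quasiperiodically forced circle homeomorphism over an irrational ω with lift F. Let A ≺ B be minimal F-invariant strips and assume there is no F-invariant strip S with A ≺ S ≺ B. Let C := {(θ,x) ∈ T¹×ℝ : φ⁺_A(θ) < x < φ⁻_B(θ)}. Then either F restricted to C is topologically transitive (for all nonempty open sets U, V ⊆ C there exists n ∈ ℤ with F^n(U) ∩ V ≠ ∅), or there exists a nonempty open wandering set W ⊆ C, i.e. F^n(W) ∩ W = ∅ for all n ≥ 1. -/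
open Filter Topology MeasureTheory
open scoped ENNReal

noncomputable section

/-- Upper bounding graph `φ⁺_A(θ) = sup A_θ`. -/
def phiSup (A : Set (T1 × ℝ)) (θ : T1) : ℝ := sSup {x : ℝ | (θ, x) ∈ A}

/-- Lower bounding graph `φ⁻_A(θ) = inf A_θ`. -/
def phiInf (A : Set (T1 × ℝ)) (θ : T1) : ℝ := sInf {x : ℝ | (θ, x) ∈ A}

/-- `A ≺ B`: the strip `A` lies strictly below the strip `B`. -/
def StripLt (A B : Set (T1 × ℝ)) : Prop := ∀ θ, phiSup A θ < phiInf B θ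

/-- A minimal invariant strip: one not strictly containing another invariant strip. -/
def IsMinimalStrip (ω : ℝ) (F : T1 → ℝ → ℝ) (A : Set (T1 × ℝ)) : Prop :=
  IsInvStrip ω F A ∧ ∀ S : Set (T1 × ℝ), IsInvStrip ω F S → S ⊆ A → S = A

/-- A fibred action of `ℤ²` on the plane, translating the base by `a ω + b`. -/
structure SkAct (ω : ℝ) (φ : ℤ × ℤ → ℝ × ℝ → ℝ × ℝ) : Prop where
  zero : ∀ p, φ 0 p = p
  add : ∀ σ ρ p, φ (σ + ρ) p = φ σ (φ ρ p)
  cont : ∀ σ, Continuous (φ σ)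
  fst : ∀ σ p, (φ σ p).1 = p.1 + (σ.1 * ω + σ.2)
  mono : ∀ σ p q, p.1 = q.1 → p.2 < q.2 → (φ σ p).2 < (φ σ q).2

lemma SkAct.neg_left {ω : ℝ} {φ : ℤ × ℤ → ℝ × ℝ → ℝ × ℝ} (H : SkAct ω φ) (σ p) :
    φ (-σ) (φ σ p) = p := by
  rw [← H.add, neg_add_cancel, H.zero]

lemma SkAct.neg_right {ω : ℝ} {φ : ℤ × ℤ → ℝ × ℝ → ℝ × ℝ} (H : SkAct ω φ) (σ p) :
    φ σ (φ (-σ) p) = p := by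
  rw [← H.add, add_neg_cancel, H.zero]

/-- Curve lemma, positive drift. -/
lemma SkAct.curve_pos {ω : ℝ} {φ : ℤ × ℤ → ℝ × ℝ → ℝ × ℝ} (H : SkAct ω φ)
    (U : Set (ℝ × ℝ)) (hU : Convex ℝ U) (τ : ℤ × ℤ) (hr : 0 < τ.1 * ω + τ.2)
    (q : ℝ × ℝ) (hq : q ∈ U) (hq' : φ τ q ∈ U) :
    ∃ g : ℝ → ℝ, Continuous g ∧ (∀ t, ∃ σ, ∃ u ∈ U, (t, g t) = φ σ u) ∧
      ∃ t, (t, g t) ∈ U := by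
  obtain ⟨t0, x0⟩ := q
  set r : ℝ := τ.1 * ω + τ.2 with hrdef
  set x1 : ℝ := (φ τ (t0, x0)).2 with hx1
  have hτq : φ τ (t0, x0) = (t0 + r, x1) := Prod.ext (by rw [H.fst]) rfl
  let seg : ℝ → ℝ × ℝ := fun s => (s, x0 + (s - t0) / r * (x1 - x0))
  have hsegU : ∀ s, t0 ≤ s → s ≤ t0 + r → seg s ∈ U := by
    intro s h1 h2
    have h3 : 0 ≤ (s - t0) / r := div_nonneg (by linarith) hr.le
    have h4 : (s - t0) / r ≤ 1 := by rw [div_le_one hr]; linarith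
    have := hU hq hq' (a := 1 - (s - t0) / r) (b := (s - t0) / r) (by linarith) h3 (by ring)
    rw [hτq] at this
    convert this using 1
    ext
    · simp only [seg, Prod.smul_mk, Prod.mk_add_mk, smul_eq_mul]
      field_simp
      ring
    · simp only [seg, Prod.smul_mk, Prod.mk_add_mk, smul_eq_mul]
      ring
  have hsegc : Continuous seg := by
    simp only [seg]; fun_prop
  let K : ℝ → ℤ := fun t => ⌊(t - t0) / r⌋
  have hdr : ∀ k : ℤ, (((k • τ : ℤ × ℤ).1 : ℝ) * ω + ((k • τ : ℤ × ℤ).2 : ℝ)) = k * r := by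
    intro k
    simp [hrdef]; ring
  let gk : ℤ → ℝ → ℝ := fun k t => (φ (k • τ) (seg (t - k * r))).2
  have hgk : ∀ k t, (t, gk k t) = φ (k • τ) (seg (t - k * r)) := by
    intro k t
    ext
    · rw [H.fst, hdr]; simp [seg]
    · rfl
  have hK1 : ∀ t, t0 + K t * r ≤ t := by
    intro t
    have := Int.floor_le ((t - t0) / r)
    rw [le_div_iff₀ hr] at this
    simp only [K]; linarith
  have hK2 : ∀ t, t < t0 + (K t + 1) * r := by
    intro t
    have := Int.lt_floor_add_one ((t - t0) / r)
    rw [div_lt_iff₀ hr] at this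
    simp only [K]; linarith
  refine ⟨fun t => gk (K t) t, ?_, ?_, ?_⟩
  · let f : ℤ → Set ℝ := fun k => Set.Icc (t0 + k * r) (t0 + (k + 1) * r)
    have hlf : LocallyFinite f := by
      intro x
      refine ⟨Set.Ioo (x - r) (x + r), Ioo_mem_nhds (by linarith) (by linarith), ?_⟩
      refine (Set.finite_Icc (K x - 2) (K x + 2)).subset ?_
      rintro k ⟨y, ⟨hy1, hy2⟩, hy3, hy4⟩
      have a1 := hK1 x
      have a2 := hK2 x
      constructor
      · have : ((K x - 2 : ℤ) : ℝ) * r ≤ k * r := by push_cast; nlinarith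
        exact_mod_cast le_of_mul_le_mul_right this hr
      · have : (k : ℝ) * r ≤ ((K x + 2 : ℤ) : ℝ) * r := by push_cast; nlinarith
        exact_mod_cast le_of_mul_le_mul_right this hr
    refine hlf.continuous ?_ (fun _ => isClosed_Icc) ?_
    · ext t
      simp only [Set.mem_iUnion, Set.mem_univ, iff_true]
      exact ⟨K t, hK1 t, (hK2 t).le⟩
    · intro k
      have hc : Continuous (gk k) :=
        continuous_snd.comp ((H.cont _).comp (hsegc.comp (by fun_prop)))
      refine hc.continuousOn.congr ?_
      rintro t ⟨h1, h2⟩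
      rcases h2.lt_or_eq with h2 | h2
      · have : K t = k := by
          simp only [K]
          rw [Int.floor_eq_iff, le_div_iff₀ hr, div_lt_iff₀ hr]
          constructor <;> linarith
        simp only [this]
      · have : K t = k + 1 := by
          simp only [K]
          rw [Int.floor_eq_iff, le_div_iff₀ hr, div_lt_iff₀ hr]
          push_cast
          constructor <;> nlinarith
        simp only [this, gk]
        have e1 : t - ((k + 1 : ℤ) : ℝ) * r = t0 := by push_cast; linarith
        have e2 : t - (k : ℝ) * r = t0 + r := by linarith
        rw [e1, e2, add_zsmul, one_zsmul, H.add]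
        have e3 : seg t0 = (t0, x0) := by simp [seg]
        have e4 : seg (t0 + r) = (t0 + r, x1) := by
          simp only [seg]
          congr 1
          field_simp
          ring
        rw [e3, e4, hτq]
  · intro t
    refine ⟨K t • τ, seg (t - K t * r), hsegU _ ?_ ?_, hgk _ _⟩
    · linarith [hK1 t]
    · linarith [hK2 t]
  · refine ⟨t0, ?_⟩
    have : K t0 = 0 := by simp [K]
    simp only [this]
    rw [hgk]
    simp only [zero_zsmul, H.zero, Int.cast_zero, zero_mul, sub_zero]
    exact hsegU _ le_rfl (by linarith)

lemma SkAct.curve {ω : ℝ} {φ : ℤ × ℤ → ℝ × ℝ → ℝ × ℝ} (H : SkAct ω φ)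
    (U : Set (ℝ × ℝ)) (hU : Convex ℝ U) (τ : ℤ × ℤ) (hr : τ.1 * ω + τ.2 ≠ 0)
    (q : ℝ × ℝ) (hq : q ∈ U) (hq' : φ τ q ∈ U) :
    ∃ g : ℝ → ℝ, Continuous g ∧ (∀ t, ∃ σ, ∃ u ∈ U, (t, g t) = φ σ u) ∧
      ∃ t, (t, g t) ∈ U := by
  rcases hr.lt_or_gt with h | h
  · refine H.curve_pos U hU (-τ) ?_ (φ τ q) hq' ?_
    · simp only [Prod.fst_neg, Prod.snd_neg, Int.cast_neg]; linarith
    · rwa [H.neg_left]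
  · exact H.curve_pos U hU τ h q hq hq'

lemma drift_ne {ω : ℝ} (hω : Irrational ω) (n b : ℤ) (hn : 1 ≤ n) :
    (n : ℝ) * ω + b ≠ 0 := by
  have := (hω.intCast_mul (m := n) (by omega)).add_intCast b
  exact this.ne_zero

lemma side {g : ℝ → ℝ} (hg : Continuous g) {S : Set (ℝ × ℝ)} (hS : IsPreconnected S)
    (hd : ∀ p ∈ S, p.2 ≠ g p.1) : (∀ p ∈ S, g p.1 < p.2) ∨ (∀ p ∈ S, p.2 < g p.1) := by
  have hc1 : IsOpen {p : ℝ × ℝ | g p.1 < p.2} := isOpen_lt (by fun_prop) (by fun_prop)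
  have hc2 : IsOpen {p : ℝ × ℝ | p.2 < g p.1} := isOpen_lt (by fun_prop) (by fun_prop)
  refine hS.subset_or_subset hc1 hc2 ?_ ?_
  · exact Set.disjoint_left.mpr fun p h1 h2 => lt_asymm (α := ℝ) h1 h2
  · intro p hp
    rcases (hd p hp).lt_or_gt with h | h
    · exact Or.inr h
    · exact Or.inl h

lemma SkAct.dichotomy {ω : ℝ} (hω : Irrational ω) {φ : ℤ × ℤ → ℝ × ℝ → ℝ × ℝ} (H : SkAct ω φ)
    (U V : Set (ℝ × ℝ)) (hU : Convex ℝ U) (hV : Convex ℝ V) (hVo : IsOpen V)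
    (hUV : ∀ σ, ∀ u ∈ U, φ σ u ∉ V)
    (nwU : ∃ n b : ℤ, 1 ≤ n ∧ ∃ u ∈ U, φ (n, b) u ∈ U)
    (nwV : ∀ W ⊆ V, IsOpen W → W.Nonempty → ∃ n b : ℤ, 1 ≤ n ∧ ∃ u ∈ W, φ (n, b) u ∈ W)
    (hVn : V.Nonempty) :
    ∃ g h : ℝ → ℝ, Continuous g ∧ Continuous h ∧
      (∀ t, ∃ σ, ∃ u ∈ U, (t, g t) = φ σ u) ∧ (∀ t, ∃ σ, ∃ u ∈ V, (t, h t) = φ σ u) ∧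
      ((∀ σ s, g (φ σ (s, h s)).1 < (φ σ (s, h s)).2) ∨
       (∀ σ s, (φ σ (s, h s)).2 < g (φ σ (s, h s)).1)) := by
  obtain ⟨nu, bu, hnu, u, huU, huU'⟩ := nwU
  obtain ⟨g, hg, hgU, -⟩ := H.curve U hU (nu, bu) (drift_ne hω _ _ hnu) u huU huU'
  obtain ⟨n, b, hn, v, hvV, hvV'⟩ := nwV V subset_rfl hVo hVn
  obtain ⟨h, hh, hhV, t1, ht1⟩ := H.curve V hV (n, b) (drift_ne hω _ _ hn) v hvV hvV'
  refine ⟨g, h, hg, hh, hgU, hhV, ?_⟩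
  set s : ℝ := (n : ℝ) * ω + b with hs
  have hs0 : s ≠ 0 := drift_ne hω _ _ hn
  have hnR : (1 : ℝ) ≤ n := by exact_mod_cast hn
  -- the second return
  obtain ⟨n', b', hn', w, ⟨hwV, hwd⟩, ⟨hwV', hwd'⟩⟩ :=
    nwV (V ∩ {p | |p.1 - v.1| < |s| / (2 * n)}) Set.inter_subset_left
      (hVo.inter (isOpen_lt (by fun_prop) continuous_const))
      ⟨v, hvV, by simp only [Set.mem_ofPred_eq, sub_self, abs_zero]; positivity⟩
  have hs' : |(n' : ℝ) * ω + b'| < |s| / n := by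
    have h1 : (φ (n', b') w).1 = w.1 + (n' * ω + b') := H.fst _ _
    have h2 : (n' : ℝ) * ω + b' = ((φ (n', b') w).1 - v.1) - (w.1 - v.1) := by rw [h1]; ring
    rw [h2]
    calc _ ≤ _ := abs_sub _ _
      _ < |s| / (2 * n) + |s| / (2 * n) := add_lt_add hwd' hwd
      _ = |s| / n := by field_simp; ring
  have hdet : n * b' - n' * b ≠ 0 := by
    intro h0
    have h0' : (n : ℝ) * b' = n' * b := by exact_mod_cast sub_eq_zero.mp h0
    have h3 : ((n' : ℝ) * ω + b') = n' * s / n := by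
      rw [hs]; field_simp; linarith
    rw [h3, abs_div, abs_mul, abs_of_pos (show (0 : ℝ) < n by linarith),
      div_lt_div_iff_of_pos_right (by linarith)] at hs'
    have hn'R : (1 : ℝ) ≤ |(n' : ℝ)| := by
      rw [abs_of_nonneg] <;> [exact_mod_cast hn'; exact_mod_cast (by omega)]
    nlinarith [abs_nonneg s]
  -- connected set
  let S : Set (ℝ × ℝ) := V ∪ Set.range (fun t => (t, h t))
  have hSc : IsPreconnected S :=
    hV.isPreconnected.union (t1, h t1) ht1 ⟨t1, rfl⟩
      (isPreconnected_range (by fun_prop))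
  have hSV : ∀ p ∈ S, ∃ σ, ∃ u ∈ V, p = φ σ u := by
    rintro p (hp | ⟨t, rfl⟩)
    · exact ⟨0, p, hp, (H.zero p).symm⟩
    · exact hhV t
  have hSd : ∀ σ, ∀ p ∈ φ σ '' S, p.2 ≠ g p.1 := by
    rintro σ _ ⟨p, hp, rfl⟩ heq
    obtain ⟨ρ, v', hv', rfl⟩ := hSV p hp
    obtain ⟨κ, u', hu', e⟩ := hgU (φ σ (φ ρ v')).1
    have e2 : φ σ (φ ρ v') = φ κ u' := by rw [← e, ← heq]
    apply hUV (-ρ + (-σ + κ)) u' hu'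
    rw [H.add, H.add, ← e2, H.neg_left, H.neg_left]
    exact hv'
  have hdich : ∀ σ, (∀ p ∈ φ σ '' S, g p.1 < p.2) ∨ (∀ p ∈ φ σ '' S, p.2 < g p.1) :=
    fun σ => side hg (hSc.image _ (H.cont σ).continuousOn) (hSd σ)
  let P : ℤ × ℤ → Prop := fun σ => ∀ p ∈ φ σ '' S, g p.1 < p.2
  have hPstep : ∀ τ v, v ∈ V → φ τ v ∈ V → ∀ σ, P (σ + τ) ↔ P σ := by
    intro τ v hv hv' σ
    have m1 : φ (σ + τ) v ∈ φ (σ + τ) '' S := ⟨v, Or.inl hv, rfl⟩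
    have m2 : φ (σ + τ) v ∈ φ σ '' S := ⟨φ τ v, Or.inl hv', (H.add _ _ _).symm⟩
    constructor
    · intro hP
      rcases hdich σ with h' | h'
      · exact h'
      · exact absurd (hP _ m1) (lt_asymm (h' _ m2))
    · intro hP
      rcases hdich (σ + τ) with h' | h'
      · exact h'
      · exact absurd (hP _ m2) (lt_asymm (h' _ m1))
  have hPz : ∀ τ : ℤ × ℤ, (∀ σ, P (σ + τ) ↔ P σ) → ∀ (k : ℤ) σ, P (σ + k • τ) ↔ P σ := by
    intro τ hτ k
    induction k using Int.induction_on with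
    | zero => intro σ; simp
    | succ k ih => intro σ; rw [add_zsmul, one_zsmul, ← add_assoc, hτ, ih]
    | pred k ih =>
      intro σ
      rw [← hτ, sub_zsmul, one_zsmul, add_assoc, neg_add_cancel_right, ih]
  have hP1 := hPz _ (hPstep (n, b) v hvV hvV')
  have hP2 := hPz _ (hPstep (n', b') w hwV hwV')
  have hPN : ∀ σ δ : ℤ × ℤ, ∀ k : ℤ, P (σ + (k * (n * b' - n' * b)) • δ) ↔ P σ := by
    rintro σ ⟨d1, d2⟩ k
    have : (k * (n * b' - n' * b)) • ((d1, d2) : ℤ × ℤ) =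
        (k * (b' * d1 - n' * d2)) • ((n, b) : ℤ × ℤ) +
          (k * (n * d2 - b * d1)) • ((n', b') : ℤ × ℤ) := by
      ext <;> simp <;> ring
    rw [this, ← add_assoc, hP2, hP1]
  have key : ∀ σ ρ, P σ → ¬ P ρ → False := by
    intro σ ρ hσ hρ
    have hρ' : ∀ p ∈ φ ρ '' S, p.2 < g p.1 := (hdich ρ).resolve_left hρ
    have hk : ∀ k : ℕ, ∀ t, g (φ (ρ + (k + 1) • (σ - ρ)) (t, h t)).1 <
        (φ (ρ + (k + 1) • (σ - ρ)) (t, h t)).2 := by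
      intro k
      induction k with
      | zero =>
        intro t
        simp only [zero_add, one_smul, add_sub_cancel]
        exact hσ _ ⟨_, Or.inr ⟨t, rfl⟩, rfl⟩
      | succ k ih =>
        intro t
        have e : φ (ρ + (k + 1 + 1) • (σ - ρ)) (t, h t) =
            φ (σ - ρ) (φ (ρ + (k + 1) • (σ - ρ)) (t, h t)) := by
          rw [← H.add]; congr 1; rw [add_smul (k + 1) 1, one_smul]; abel
        rw [e]
        set y := φ (ρ + (k + 1) • (σ - ρ)) (t, h t) with hy
        have hyA := ih t
        rw [← hy] at hyA
        let t' := y.1 - (ρ.1 * ω + ρ.2)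
        have hq1 : (φ ρ (t', h t')).1 = y.1 := by rw [H.fst]; simp [t']
        have hqB := hρ' (φ ρ (t', h t')) ⟨_, Or.inr ⟨t', rfl⟩, rfl⟩
        rw [hq1] at hqB
        have h5 := H.mono (σ - ρ) _ _ hq1 (hqB.trans hyA)
        have h6 := hσ (φ σ (t', h t')) ⟨_, Or.inr ⟨t', rfl⟩, rfl⟩
        rw [← H.add, sub_add_cancel] at h5
        have h7 : (φ σ (t', h t')).1 = (φ (σ - ρ) y).1 := by
          rw [H.fst, H.fst]; simp [t']; ring
        rw [h7] at h6
        exact h6.trans h5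
    set D := n * b' - n' * b with hD
    have hsgn : Int.sign D * D = ((D.natAbs - 1 : ℕ) : ℤ) + 1 := by
      rw [Int.sign_mul_self_eq_natAbs]; omega
    have hN : P (ρ + ((D.natAbs - 1) + 1) • (σ - ρ)) := by
      rcases hdich (ρ + ((D.natAbs - 1) + 1) • (σ - ρ)) with h' | h'
      · exact h'
      · exact absurd (hk (D.natAbs - 1) 0) (lt_asymm (h' _ ⟨_, Or.inr ⟨0, rfl⟩, rfl⟩))
    apply hρ
    rw [← hPN ρ (σ - ρ) (Int.sign D), hsgn]
    exact_mod_cast hN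
  by_cases hall : ∀ σ, P σ
  · left
    intro σ s
    exact hall σ _ ⟨_, Or.inr ⟨s, rfl⟩, rfl⟩
  · right
    push Not at hall
    obtain ⟨ρ, hρ⟩ := hall
    intro σ s
    have : ¬ P σ := fun hσ => key σ ρ hσ hρ
    exact (hdich σ).resolve_left this _ ⟨_, Or.inr ⟨s, rfl⟩, rfl⟩


/-- The projection of the plane onto the annulus. -/
def pr (e : ℝ × ℝ) : T1 × ℝ := ((e.1 : T1), e.2)

lemma pr_cont : Continuous pr :=
  ((AddCircle.continuous_mk' 1).comp continuous_fst).prodMk continuous_snd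

lemma pr_open : IsOpenMap pr :=
  IsOpenMap.prodMap (f := fun t : ℝ => (t : T1)) (g := fun x : ℝ => x)
    QuotientAddGroup.isOpenMap_coe IsOpenMap.id

lemma pr_surj (P : T1 × ℝ) : ∃ e, pr e = P := by
  obtain ⟨θ, x⟩ := P
  obtain ⟨t, rfl⟩ := QuotientAddGroup.mk_surjective θ
  exact ⟨(t, x), rfl⟩

lemma pr_eq {e e' : ℝ × ℝ} (h : pr e = pr e') : ∃ b : ℤ, e' = (e.1 + b, e.2) := by
  have h1 : (e.1 : T1) = (e'.1 : T1) := congrArg Prod.fst h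
  have h2 : e.2 = e'.2 := congrArg (fun P : T1 × ℝ => P.2) h
  have h3 : ((e'.1 - e.1 : ℝ) : T1) = 0 := by
    rw [AddCircle.coe_sub, h1, sub_self]
  obtain ⟨n, hn⟩ := (AddCircle.coe_eq_zero_iff (1 : ℝ)).mp h3
  refine ⟨n, Prod.ext ?_ h2.symm⟩
  simp only [zsmul_eq_mul, mul_one] at hn
  simp only [hn]
  ring

lemma exists_act (ω : ℝ) (F : T1 → ℝ → ℝ) (hF : IsQpfLift ω F) :
    ∃ φ, SkAct ω φ ∧ (∀ e, pr (φ (1, 0) e) = skew ω F (pr e)) ∧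
      ∀ (b : ℤ) e, φ (0, b) e = (e.1 + b, e.2) := by
  choose inv hinv using hF.surj
  have hinv' : ∀ θ x, inv θ (F θ x) = x := fun θ x => (hF.mono θ).injective (hinv _ _)
  have hcF : Continuous fun p : ℝ × ℝ => F (p.1 : T1) p.2 := hF.cont.comp pr_cont
  have hci : Continuous fun p : ℝ × ℝ => inv (p.1 : T1) p.2 := by
    rw [continuous_iff_continuousAt]
    rintro ⟨t, y⟩
    rw [ContinuousAt, tendsto_order]
    constructor
    · intro a ha
      have h1 : F t a < y := by
        have := hF.mono t ha
        rwa [hinv] at this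
      have ho : IsOpen {p : ℝ × ℝ | F (p.1 : T1) a < p.2} :=
        isOpen_lt (hcF.comp (continuous_fst.prodMk continuous_const)) continuous_snd
      filter_upwards [ho.mem_nhds h1] with p hp
      by_contra hc
      have := (hF.mono (p.1 : T1)).monotone (not_lt.mp hc)
      rw [hinv] at this
      exact absurd hp (not_lt.mpr this)
    · intro a ha
      have h1 : y < F t a := by
        have := hF.mono t ha
        rwa [hinv] at this
      have ho : IsOpen {p : ℝ × ℝ | p.2 < F (p.1 : T1) a} :=
        isOpen_lt continuous_snd (hcF.comp (continuous_fst.prodMk continuous_const))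
      filter_upwards [ho.mem_nhds h1] with p hp
      by_contra hc
      have := (hF.mono (p.1 : T1)).monotone (not_lt.mp hc)
      rw [hinv] at this
      exact absurd hp (not_lt.mpr this)
  let G : (ℝ × ℝ) ≃ₜ (ℝ × ℝ) :=
    { toFun := fun p => (p.1 + ω, F (p.1 : T1) p.2)
      invFun := fun p => (p.1 - ω, inv ((p.1 - ω : ℝ) : T1) p.2)
      left_inv := by
        rintro ⟨t, x⟩
        simp [hinv']
      right_inv := by
        rintro ⟨t, x⟩
        simp only [hinv, sub_add_cancel]
      continuous_toFun := (continuous_fst.add continuous_const).prodMk hcF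
      continuous_invFun := (continuous_fst.sub continuous_const).prodMk
        (hci.comp ((continuous_fst.sub continuous_const).prodMk continuous_snd)) }
  let T : (ℝ × ℝ) ≃ₜ (ℝ × ℝ) := Homeomorph.addRight ((1 : ℝ), (0 : ℝ))
  have hG : ∀ p, G p = (p.1 + ω, F (p.1 : T1) p.2) := fun p => rfl
  have hT : ∀ p, T p = (p.1 + 1, p.2) := fun p => by
    simp only [T, Homeomorph.coe_addRight]
    ext <;> simp
  have hcomm : Commute G T := by
    ext p
    · simp only [Homeomorph.mul_apply, hG, hT]; ring
    · simp only [Homeomorph.mul_apply, hG, hT, AddCircle.coe_add_period]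
  have hTz : ∀ (b : ℤ) p, (T ^ b) p = (p.1 + b, p.2) := by
    intro b
    induction b using Int.induction_on with
    | zero => intro p; simp
    | succ k ih => intro p; rw [zpow_add, zpow_one, Homeomorph.mul_apply, hT, ih]; simp; ring
    | pred k ih =>
      intro p
      obtain ⟨q, rfl⟩ := T.surjective p
      rw [← Homeomorph.mul_apply, ← zpow_add_one, sub_add_cancel, ih, hT]; simp
  have hG1 : ∀ (a : ℤ) p, ((G ^ a) p).1 = p.1 + a * ω := by
    intro a
    induction a using Int.induction_on with
    | zero => intro p; simp
    | succ k ih => intro p; rw [zpow_add, zpow_one, Homeomorph.mul_apply, ih, hG]; simp; ring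
    | pred k ih =>
      intro p
      obtain ⟨q, rfl⟩ := G.surjective p
      rw [← Homeomorph.mul_apply, ← zpow_add_one, sub_add_cancel, ih, hG]; simp; ring
  have hGm1 : ∀ p q, p.1 = q.1 → (p.2 < q.2 ↔ (G p).2 < (G q).2) := by
    intro p q h
    simp only [hG, h, (hF.mono _).lt_iff_lt]
  have hGm : ∀ (a : ℤ) p q, p.1 = q.1 → p.2 < q.2 → ((G ^ a) p).2 < ((G ^ a) q).2 := by
    intro a
    induction a using Int.induction_on with
    | zero => intro p q _ h; simpa using h
    | succ k ih =>
      intro p q h1 h2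
      rw [zpow_add, zpow_one, Homeomorph.mul_apply, Homeomorph.mul_apply]
      refine ih _ _ ?_ ((hGm1 _ _ h1).mp h2)
      simp [hG, h1]
    | pred k ih =>
      intro p q h1 h2
      obtain ⟨p, rfl⟩ := G.surjective p
      obtain ⟨q, rfl⟩ := G.surjective q
      have h1' : p.1 = q.1 := by simpa [hG] using h1
      rw [← Homeomorph.mul_apply, ← Homeomorph.mul_apply, ← zpow_add_one, sub_add_cancel]
      exact ih _ _ h1' ((hGm1 _ _ h1').mpr h2)
  refine ⟨fun σ p => (G ^ σ.1 * T ^ σ.2) p, ⟨?_, ?_, ?_, ?_, ?_⟩, ?_, ?_⟩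
  · intro p; simp
  · intro σ ρ p
    rw [← Homeomorph.mul_apply]
    congr 1
    have : Commute (T ^ σ.2) (G ^ ρ.1) := (hcomm.symm.zpow_zpow _ _)
    simp only [Prod.fst_add, Prod.snd_add, zpow_add]
    rw [mul_assoc (G ^ σ.1), ← mul_assoc (G ^ ρ.1), ← this.eq]
    simp only [mul_assoc]
  · intro σ
    exact Homeomorph.continuous _
  · intro σ p
    simp only [Homeomorph.mul_apply, hG1, hTz]; ring
  · intro σ p q h1 h2
    simp only [Homeomorph.mul_apply, hTz]
    exact hGm _ _ _ (by simp [h1]) h2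
  · intro e
    simp [hG, pr, skew]
  · intro b e
    simp [hTz]

lemma skew_inj {ω : ℝ} {F : T1 → ℝ → ℝ} (hF : IsQpfLift ω F) :
    Function.Injective (skew ω F) := by
  rintro ⟨θ, x⟩ ⟨θ', x'⟩ h
  simp only [skew, Prod.mk.injEq, add_left_inj] at h
  obtain ⟨rfl, h⟩ := h
  rw [(hF.mono θ).injective h]

lemma skew_mem {ω : ℝ} {F : T1 → ℝ → ℝ} (hF : IsQpfLift ω F) {A : Set (T1 × ℝ)}
    (hA : skew ω F '' A = A) (P : T1 × ℝ) : skew ω F P ∈ A ↔ P ∈ A := by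
  conv_lhs => rw [← hA]
  exact (skew_inj hF).mem_set_image

lemma pr_iter {ω : ℝ} {F : T1 → ℝ → ℝ} {φ : ℤ × ℤ → ℝ × ℝ → ℝ × ℝ} (H : SkAct ω φ)
    (hpr : ∀ e, pr (φ (1, 0) e) = skew ω F (pr e)) (n : ℕ) (e : ℝ × ℝ) :
    pr (φ ((n : ℤ), 0) e) = (skew ω F)^[n] (pr e) := by
  induction n with
  | zero =>
    have : (((0 : ℕ) : ℤ), (0 : ℤ)) = 0 := rfl
    rw [this, H.zero]; rfl
  | succ n ih =>
    have : (((n + 1 : ℕ) : ℤ), (0 : ℤ)) = (1, 0) + ((n : ℤ), 0) := by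
      ext <;> simp; ring
    rw [this, H.add, hpr, ih, Function.iterate_succ_apply']

lemma pr_shift {ω : ℝ} {φ : ℤ × ℤ → ℝ × ℝ → ℝ × ℝ} (H : SkAct ω φ)
    (hT : ∀ (b : ℤ) e, φ (0, b) e = (e.1 + b, e.2)) (a b : ℤ) (e : ℝ × ℝ) :
    pr (φ (a, b) e) = pr (φ (a, 0) e) := by
  have : ((a, b) : ℤ × ℤ) = (0, b) + (a, 0) := by ext <;> simp
  rw [this, H.add, hT]
  simp [pr]

lemma pr_mem {ω : ℝ} {F : T1 → ℝ → ℝ} (hF : IsQpfLift ω F) {φ : ℤ × ℤ → ℝ × ℝ → ℝ × ℝ}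
    (H : SkAct ω φ) (hpr : ∀ e, pr (φ (1, 0) e) = skew ω F (pr e))
    (hT : ∀ (b : ℤ) e, φ (0, b) e = (e.1 + b, e.2)) {A : Set (T1 × ℝ)}
    (hA : skew ω F '' A = A) (σ : ℤ × ℤ) (e : ℝ × ℝ) : pr (φ σ e) ∈ A ↔ pr e ∈ A := by
  obtain ⟨a, b⟩ := σ
  rw [pr_shift H hT]
  clear b
  have key : ∀ (n : ℕ) e, pr (φ ((n : ℤ), 0) e) ∈ A ↔ pr e ∈ A := by
    intro n e
    rw [pr_iter H hpr]
    induction n with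
    | zero => rfl
    | succ n ih => rw [Function.iterate_succ_apply', skew_mem hF hA, ih]
  obtain ⟨n, rfl | rfl⟩ := a.eq_nat_or_neg
  · exact key n e
  · rw [← key n]
    have : φ ((n : ℤ), 0) (φ (-(n : ℤ), 0) e) = e := by
      have := H.neg_right ((n : ℤ), 0) e
      simpa using this
    rw [this]

lemma phiSup_lt {ω : ℝ} {F : T1 → ℝ → ℝ} {A : Set (T1 × ℝ)} (hA : IsInvStrip ω F A)
    (θ : T1) (x : ℝ) : phiSup A θ < x ↔ ∀ y, (θ, y) ∈ A → y < x := by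
  obtain ⟨a, b, hab, h⟩ := hA.2.2 θ
  have hm : ∀ y, (θ, y) ∈ A ↔ y ∈ Set.Icc a b := fun y => by rw [← h]; rfl
  rw [phiSup, h, csSup_Icc hab]
  simp only [hm]
  exact ⟨fun h y hy => hy.2.trans_lt h, fun h => h b ⟨hab, le_rfl⟩⟩

lemma lt_phiInf {ω : ℝ} {F : T1 → ℝ → ℝ} {A : Set (T1 × ℝ)} (hA : IsInvStrip ω F A)
    (θ : T1) (x : ℝ) : x < phiInf A θ ↔ ∀ y, (θ, y) ∈ A → x < y := by
  obtain ⟨a, b, hab, h⟩ := hA.2.2 θ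
  have hm : ∀ y, (θ, y) ∈ A ↔ y ∈ Set.Icc a b := fun y => by rw [← h]; rfl
  rw [phiInf, h, csInf_Icc hab]
  simp only [hm]
  exact ⟨fun h y hy => h.trans_le hy.1, fun h => h a ⟨le_rfl, hab⟩⟩

lemma exists_fib {ω : ℝ} {F : T1 → ℝ → ℝ} {A : Set (T1 × ℝ)} (hA : IsInvStrip ω F A)
    (θ : T1) : ∃ y, (θ, y) ∈ A := by
  obtain ⟨a, b, hab, h⟩ := hA.2.2 θ
  exact ⟨a, by
    have : a ∈ {x : ℝ | (θ, x) ∈ A} := by rw [h]; exact ⟨le_rfl, hab⟩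
    exact this⟩

lemma strip_exists {ω : ℝ} {F : T1 → ℝ → ℝ} (hF : IsQpfLift ω F)
    {φ : ℤ × ℤ → ℝ × ℝ → ℝ × ℝ}
    (H : SkAct ω φ) (hpr : ∀ e, pr (φ (1, 0) e) = skew ω F (pr e))
    (hT : ∀ (b : ℤ) e, φ (0, b) e = (e.1 + b, e.2)) {A B : Set (T1 × ℝ)}
    (hA : IsInvStrip ω F A) (hB : IsInvStrip ω F B) (g h : ℝ → ℝ)
    (hg : Continuous g) (hh : Continuous h)
    (gA : ∀ (t : ℝ) y, ((t : T1), y) ∈ A → y < g t) (hB' : ∀ (t : ℝ) y, ((t : T1), y) ∈ B → h t < y)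
    (D : ∀ σ s, g (φ σ (s, h s)).1 < (φ σ (s, h s)).2) :
    ∃ S : Set (T1 × ℝ), IsInvStrip ω F S ∧ StripLt A S ∧ StripLt S B := by
  let Kt : Set (ℝ × ℝ) := {e | ∀ σ, g (φ σ e).1 ≤ (φ σ e).2 ∧ (φ σ e).2 ≤ h (φ σ e).1}
  let K : Set (T1 × ℝ) := {P | ∀ e, pr e = P → e ∈ Kt}
  have hKtφ : ∀ ρ e, e ∈ Kt → φ ρ e ∈ Kt := by
    intro ρ e he σ
    rw [← H.add]; exact he _
  have hKpr : ∀ e, pr e ∈ K ↔ e ∈ Kt := by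
    intro e
    refine ⟨fun h => h e rfl, fun h e' he' => ?_⟩
    obtain ⟨b, rfl⟩ := pr_eq he'.symm
    rw [← hT]
    exact hKtφ _ _ h
  have hKt_closed : IsClosed Kt := by
    have : Kt = ⋂ σ, {e | g (φ σ e).1 ≤ (φ σ e).2 ∧ (φ σ e).2 ≤ h (φ σ e).1} := by
      ext e; simp [Kt]
    rw [this]
    refine isClosed_iInter fun σ => ?_
    have := H.cont σ
    have c1 : IsClosed {e | g (φ σ e).1 ≤ (φ σ e).2} := isClosed_le (by fun_prop) (by fun_prop)
    have c2 : IsClosed {e | (φ σ e).2 ≤ h (φ σ e).1} := isClosed_le (by fun_prop) (by fun_prop)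
    exact c1.inter c2
  have hK_closed : IsClosed K := by
    rw [← isOpen_compl_iff]
    have : Kᶜ = pr '' Ktᶜ := by
      ext P
      obtain ⟨e, rfl⟩ := pr_surj P
      constructor
      · intro hP
        exact ⟨e, fun he => hP ((hKpr e).mpr he), rfl⟩
      · rintro ⟨e', he', h⟩ hP
        exact he' (hP e' h)
    rw [this]
    exact pr_open _ hKt_closed.isOpen_compl
  have hKb : ∀ t x, ((t, x) : ℝ × ℝ) ∈ Kt → g t ≤ x ∧ x ≤ h t := by
    intro t x hx
    have := hx 0
    rwa [H.zero] at this
  have hKc : IsCompact K := by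
    obtain ⟨m, hm⟩ := (hA.1.image continuous_snd).bddBelow
    obtain ⟨M, hM⟩ := (hB.1.image continuous_snd).bddAbove
    refine IsCompact.of_isClosed_subset
      ((isCompact_univ (X := T1)).prod (isCompact_Icc (a := m) (b := M))) hK_closed ?_
    intro P hP
    obtain ⟨⟨t, x⟩, rfl⟩ := pr_surj P
    obtain ⟨h1, h2⟩ := hKb t x ((hKpr _).mp hP)
    obtain ⟨y, hy⟩ := exists_fib hA (t : T1)
    obtain ⟨z, hz⟩ := exists_fib hB (t : T1)
    have h3 : m ≤ y := hm ⟨_, hy, rfl⟩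
    have h4 : z ≤ M := hM ⟨_, hz, rfl⟩
    have h5 := gA t y hy
    have h6 := hB' t z hz
    exact ⟨trivial, by simp only [pr]; linarith, by simp only [pr]; linarith⟩
  have hKinv : skew ω F '' K = K := by
    ext P
    constructor
    · rintro ⟨Q, hQ, rfl⟩
      obtain ⟨e, rfl⟩ := pr_surj Q
      rw [← hpr, hKpr]
      exact hKtφ _ _ ((hKpr e).mp hQ)
    · intro hP
      obtain ⟨e, rfl⟩ := pr_surj P
      refine ⟨pr (φ (-(1, 0)) e), ?_, ?_⟩
      · rw [hKpr]
        exact hKtφ _ _ ((hKpr e).mp hP)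
      · rw [← hpr, H.neg_right]
  have hKfib : ∀ θ : T1, ∃ a b : ℝ, a ≤ b ∧ {x : ℝ | (θ, x) ∈ K} = Set.Icc a b := by
    intro θ
    obtain ⟨t, rfl⟩ := QuotientAddGroup.mk_surjective θ
    let c : ℤ × ℤ → ℝ := fun σ => t + (σ.1 * ω + σ.2)
    let l : ℤ × ℤ → ℝ := fun σ => (φ (-σ) (c σ, g (c σ))).2
    let u : ℤ × ℤ → ℝ := fun σ => (φ (-σ) (c σ, h (c σ))).2
    have hl : ∀ σ, (t, l σ) = φ (-σ) (c σ, g (c σ)) := by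
      intro σ
      ext
      · rw [H.fst]; simp [c]; ring
      · rfl
    have hu : ∀ σ, (t, u σ) = φ (-σ) (c σ, h (c σ)) := by
      intro σ
      ext
      · rw [H.fst]; simp [c]; ring
      · rfl
    have hl' : ∀ σ, φ σ (t, l σ) = (c σ, g (c σ)) := fun σ => by rw [hl, H.neg_right]
    have hu' : ∀ σ, φ σ (t, u σ) = (c σ, h (c σ)) := fun σ => by rw [hu, H.neg_right]
    have hmono : ∀ σ x y, (φ σ (t, x)).2 ≤ (φ σ (t, y)).2 ↔ x ≤ y := by
      intro σ x y
      have : StrictMono fun x => (φ σ (t, x)).2 := fun x y hxy => H.mono σ _ _ rfl hxy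
      exact this.le_iff_le
    have hc : ∀ σ x, (φ σ (t, x)).1 = c σ := fun σ x => H.fst _ _
    have hmem : ∀ x, ((t : T1), x) ∈ K ↔ ∀ σ, l σ ≤ x ∧ x ≤ u σ := by
      intro x
      have : ((t : T1), x) = pr (t, x) := rfl
      rw [this, hKpr]
      refine forall_congr' fun σ => ?_
      rw [← hmono σ (l σ), ← hmono σ x, hl', hu', hc]
    have hlu : ∀ σ ρ, l σ ≤ u ρ := by
      intro σ ρ
      rw [← hmono σ, hl', hu, ← H.add]
      have := D (σ + -ρ) (c ρ)
      have e1 : (φ (σ + -ρ) (c ρ, h (c ρ))).1 = c σ := by rw [H.add, ← hu, hc]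
      rw [e1] at this
      exact this.le
    have hbl : BddAbove (Set.range l) := ⟨u 0, by rintro _ ⟨σ, rfl⟩; exact hlu _ _⟩
    have hbu : BddBelow (Set.range u) := ⟨l 0, by rintro _ ⟨σ, rfl⟩; exact hlu _ _⟩
    refine ⟨⨆ σ, l σ, ⨅ σ, u σ, ciSup_le fun σ => le_ciInf fun ρ => hlu σ ρ, ?_⟩
    ext x
    refine (hmem x).trans ?_
    rw [Set.mem_Icc, forall_and, ciSup_le_iff hbl, le_ciInf_iff hbu]
  have hKs : IsInvStrip ω F K := ⟨hKc, hKinv, hKfib⟩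
  refine ⟨K, hKs, ?_, ?_⟩
  · intro θ
    obtain ⟨t, rfl⟩ := QuotientAddGroup.mk_surjective θ
    rw [lt_phiInf hKs]
    intro x hx
    rw [phiSup_lt hA]
    intro y hy
    exact (gA t y hy).trans_le (hKb t x ((hKpr (t, x)).mp hx)).1
  · intro θ
    obtain ⟨t, rfl⟩ := QuotientAddGroup.mk_surjective θ
    rw [lt_phiInf hB]
    intro y hy
    rw [phiSup_lt hKs]
    intro x hx
    exact (hKb t x ((hKpr (t, x)).mp hx)).2.trans_lt (hB' t y hy)

/-- Lemma 4.3: between two neighboring minimal invariant strips, the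
dynamics is either topologically transitive or admits a nonempty open wandering set.
(For `n ∈ ℤ`, the image `F^n(U)` is the forward image for `n ≥ 0` and the preimage under
`F^{|n|}` for `n < 0`.) -/
theorem between_strips_transitive_or_wandering
    (ω : ℝ) (hω : Irrational ω)
    (F : T1 → ℝ → ℝ) (hF : IsQpfLift ω F)
    (A B : Set (T1 × ℝ))
    (hA : IsMinimalStrip ω F A) (hB : IsMinimalStrip ω F B) (hAB : StripLt A B)
    (hgap : ¬ ∃ S : Set (T1 × ℝ), IsInvStrip ω F S ∧ StripLt A S ∧ StripLt S B)
    (C : Set (T1 × ℝ))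
    (hC : C = {p : T1 × ℝ | phiSup A p.1 < p.2 ∧ p.2 < phiInf B p.1}) :
    (∀ U V : Set (T1 × ℝ), IsOpen U → IsOpen V → U.Nonempty → V.Nonempty →
      U ⊆ C → V ⊆ C → ∃ n : ℕ,
        (((skew ω F)^[n] '' U) ∩ V).Nonempty ∨ (((skew ω F)^[n] ⁻¹' U) ∩ V).Nonempty) ∨
    (∃ W : Set (T1 × ℝ), IsOpen W ∧ W.Nonempty ∧ W ⊆ C ∧
      ∀ n : ℕ, 1 ≤ n → ((skew ω F)^[n] '' W) ∩ W = ∅) := by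
  have hA := hA.1
  have hB := hB.1
  by_contra hcon
  rw [not_or] at hcon
  obtain ⟨hnt, hnw⟩ := hcon
  push Not at hnt hnw
  obtain ⟨U0, V0, hU0, hV0, ⟨pu, hpu⟩, ⟨pv, hpv⟩, hUC, hVC, hdis⟩ := hnt
  obtain ⟨φ, H, hpr, hT⟩ := exists_act ω F hF
  have hCmem : ∀ t x, pr (t, x) ∈ C ↔
      (∀ y, ((t : T1), y) ∈ A → y < x) ∧ (∀ y, ((t : T1), y) ∈ B → x < y) := by
    intro t x
    rw [hC, ← phiSup_lt hA, ← lt_phiInf hB]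
    rfl
  have hCφ : ∀ σ e, pr e ∈ C → pr (φ σ e) ∈ C := by
    rintro σ ⟨t, x⟩ he
    obtain ⟨h1, h2⟩ := (hCmem t x).mp he
    have hfib : ∀ y, ((φ (-σ) ((φ σ (t, x)).1, y)).1) = t := by
      intro y
      rw [H.fst, H.fst]; simp; ring
    refine (hCmem (φ σ (t, x)).1 (φ σ (t, x)).2).mpr ⟨fun y hy => ?_, fun y hy => ?_⟩
    · have hy' : pr (φ (-σ) ((φ σ (t, x)).1, y)) ∈ A := (pr_mem hF H hpr hT hA.2.1 _ _).mpr hy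
      rw [pr, hfib y] at hy'
      have h3 := h1 _ hy'
      have := H.mono σ _ (t, x) (hfib y) h3
      rwa [H.neg_right] at this
    · have hy' : pr (φ (-σ) ((φ σ (t, x)).1, y)) ∈ B := (pr_mem hF H hpr hT hB.2.1 _ _).mpr hy
      rw [pr, hfib y] at hy'
      have h3 := h2 _ hy'
      have := H.mono σ (t, x) _ (hfib y).symm h3
      rwa [H.neg_right] at this
  have hball : ∀ W : Set (T1 × ℝ), IsOpen W → ∀ P ∈ W, ∃ U : Set (ℝ × ℝ),
      IsOpen U ∧ Convex ℝ U ∧ U.Nonempty ∧ ∀ e ∈ U, pr e ∈ W := by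
    intro W hW P hP
    obtain ⟨e, rfl⟩ := pr_surj P
    obtain ⟨ε, hε, hb⟩ := Metric.isOpen_iff.mp (hW.preimage pr_cont) e hP
    exact ⟨Metric.ball e ε, Metric.isOpen_ball, convex_ball _ _,
      ⟨e, Metric.mem_ball_self hε⟩, fun e' he' => hb he'⟩
  obtain ⟨U, hUo, hUc, hUn, hU⟩ := hball U0 hU0 pu hpu
  obtain ⟨V, hVo, hVc, hVn, hV⟩ := hball V0 hV0 pv hpv
  have nw : ∀ W : Set (ℝ × ℝ), (∀ e ∈ W, pr e ∈ C) → IsOpen W → W.Nonempty →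
      ∃ n b : ℤ, 1 ≤ n ∧ ∃ u ∈ W, φ (n, b) u ∈ W := by
    intro W hWC hWo hWn
    obtain ⟨n, hn, hne⟩ := hnw (pr '' W) (pr_open _ hWo) (hWn.image _)
      (by rintro _ ⟨e, he, rfl⟩; exact hWC e he)
    obtain ⟨_, ⟨_, ⟨e, he, rfl⟩, rfl⟩, ⟨e', he', heq⟩⟩ := hne
    rw [← pr_iter H hpr] at heq
    obtain ⟨b, hb⟩ := pr_eq heq.symm
    refine ⟨n, b, by exact_mod_cast hn, e, he, ?_⟩
    have : (((n : ℤ), b) : ℤ × ℤ) = (0, b) + ((n : ℤ), 0) := by ext <;> simp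
    rw [this, H.add, hT, ← hb]
    exact he'
  have hUV : ∀ σ, ∀ u ∈ U, φ σ u ∉ V := by
    rintro ⟨a, b⟩ u hu hv
    have hv' := hV _ hv
    rw [pr_shift H hT] at hv'
    obtain ⟨n, rfl | rfl⟩ := a.eq_nat_or_neg
    · have := (hdis n).1
      rw [pr_iter H hpr] at hv'
      have hm : (skew ω F)^[n] (pr u) ∈ (skew ω F)^[n] '' U0 ∩ V0 := ⟨⟨_, hU u hu, rfl⟩, hv'⟩
      rw [this] at hm
      exact hm
    · have := (hdis n).2
      have hm : pr (φ (-(n : ℤ), 0) u) ∈ (skew ω F)^[n] ⁻¹' U0 ∩ V0 := by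
        refine ⟨?_, hv'⟩
        rw [Set.mem_preimage, ← pr_iter H hpr]
        have h5 := H.neg_right ((n : ℤ), 0) u
        simp only [Prod.neg_mk, neg_zero] at h5
        rw [h5]
        exact hU u hu
      rw [this] at hm
      exact hm
  obtain ⟨g, h, hg, hh, hgU, hhV, hD⟩ := H.dichotomy hω U V hUc hVc hVo hUV
    (nw U (fun e he => hUC (hU e he)) hUo hUn)
    (fun W hW => nw W (fun e he => hVC (hV e (hW he)))) hVn
  have hgC : ∀ t, pr (t, g t) ∈ C := by
    intro t
    obtain ⟨σ, u, hu, e⟩ := hgU t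
    rw [e]
    exact hCφ _ _ (hUC (hU u hu))
  have hhC : ∀ t, pr (t, h t) ∈ C := by
    intro t
    obtain ⟨σ, u, hu, e⟩ := hhV t
    rw [e]
    exact hCφ _ _ (hVC (hV u hu))
  rcases hD with hD | hD
  · exact hgap (strip_exists hF H hpr hT hA hB g h hg hh (fun t => ((hCmem _ _).mp (hgC t)).1)
      (fun t => ((hCmem _ _).mp (hhC t)).2) hD)
  · refine hgap (strip_exists hF H hpr hT hA hB h g hh hg
      (fun t => ((hCmem _ _).mp (hhC t)).1) (fun t => ((hCmem _ _).mp (hgC t)).2) ?_)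
    intro σ s
    set p := φ σ (s, g s) with hp
    have h1 := hD (-σ) p.1
    by_contra hle
    rw [not_lt] at hle
    -- p.2 ≤ h p.1
    have e1 : (φ (-σ) (p.1, h p.1)).1 = s := by
      rw [H.fst, hp, H.fst]; simp; ring
    rw [e1] at h1
    have h2 := H.mono σ _ (s, g s) e1 h1
    rw [H.neg_right, ← hp] at h2
    exact absurd h2 (not_lt.mpr hle)
end
end

section
/- Let f be a quasiperiodically forced circle homeomorphism over an irrational ω with lift F. Let A ≺ B be minimal F-invariant strips with no F-invariant strip S satisfying A ≺ S ≺ B, let C := {(θ,x) ∈ T¹×ℝ : φ⁺_A(θ) < x < φ⁻_B(θ)}, and suppose there exists a nonempty open wandering set W ⊆ C (i.e. F^n(W) ∩ W = ∅ for all n ≥ 1). Then there exist a continuous curve γ : T¹ → ℝ whose graph {(θ,γ(θ)) : θ ∈ T¹} is contained in C and an integer N ≥ 1 such that either F^N_θ(γ(θ)) > γ(θ+Nω) for all θ, or F^N_θ(γ(θ)) < γ(θ+Nω) for all θ (γ is mapped strictly above, respectively strictly below, itself by the N-th iterate of F). -/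
open Filter Topology MeasureTheory
open scoped ENNReal

noncomputable section

/-! ### A combinatorial lemma on partial orders of `ℤ²` -/

lemma comb_walk (ω R : ℝ) (P : ℤ → ℤ → Prop)
    (hadd : ∀ n p n' p', P n p → P n' p' → |((n + n' : ℤ) : ℝ) * ω - ((p + p' : ℤ) : ℝ)| < R →
      P (n + n') (p + p'))
    (n₁ p₁ n₂ p₂ : ℤ) (h₁ : P n₁ p₁) (h₂ : P n₂ p₂)
    (hu : 0 < (n₁ : ℝ) * ω - p₁) (hv : (n₂ : ℝ) * ω - p₂ < 0)
    (hu' : (n₁ : ℝ) * ω - p₁ < R) (hv' : -R < (n₂ : ℝ) * ω - p₂) :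
    ∀ k a b : ℕ, a + b = k + 1 →
      |(a : ℝ) * ((n₁ : ℝ) * ω - p₁) + b * ((n₂ : ℝ) * ω - p₂)| < R →
      P (a * n₁ + b * n₂) (a * p₁ + b * p₂) := by
  intro k
  induction k with
  | zero =>
    intro a b hab _
    have : (a = 1 ∧ b = 0) ∨ (a = 0 ∧ b = 1) := by omega
    rcases this with ⟨rfl, rfl⟩ | ⟨rfl, rfl⟩
    · simpa using h₁
    · simpa using h₂
  | succ k ih =>
    intro a b hab hlt
    set u := (n₁ : ℝ) * ω - p₁ with hudef
    set v := (n₂ : ℝ) * ω - p₂ with hvdef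
    have hlt' := abs_lt.1 hlt
    have ha0 : (0 : ℝ) ≤ a := Nat.cast_nonneg a
    have hb0 : (0 : ℝ) ≤ b := Nat.cast_nonneg b
    by_cases hs : 0 < (a : ℝ) * u + b * v
    · have ha : 1 ≤ a := by
        rcases Nat.eq_zero_or_pos a with rfl | h
        · exfalso
          simp at hs
          nlinarith
        · exact h
      obtain ⟨c, rfl⟩ : ∃ c, a = c + 1 := ⟨a - 1, by omega⟩
      push_cast at hlt hlt' hs ⊢
      have h := ih c b (by omega) (by rw [abs_lt]; constructor <;> nlinarith)
      have := hadd _ _ _ _ h h₁ (by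
        have e : (((c : ℤ) * n₁ + b * n₂ + n₁ : ℤ) : ℝ) * ω - (((c : ℤ) * p₁ + b * p₂ + p₁ : ℤ) : ℝ)
          = ((c : ℝ) + 1) * u + b * v := by rw [hudef, hvdef]; push_cast; ring
        rw [e]; exact hlt)
      convert this using 1 <;> ring
    · have hb : 1 ≤ b := by
        rcases Nat.eq_zero_or_pos b with rfl | h
        · exfalso
          have : (0 : ℝ) < a := by
            have : 0 < a := by omega
            exact_mod_cast this
          simp at hs
          nlinarith
        · exact h
      obtain ⟨c, rfl⟩ : ∃ c, b = c + 1 := ⟨b - 1, by omega⟩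
      push_cast at hlt hlt' hs ⊢
      have h := ih a c (by omega) (by rw [abs_lt]; constructor <;> nlinarith)
      have := hadd _ _ _ _ h h₂ (by
        have e : (((a : ℤ) * n₁ + c * n₂ + n₂ : ℤ) : ℝ) * ω - (((a : ℤ) * p₁ + c * p₂ + p₂ : ℤ) : ℝ)
          = (a : ℝ) * u + (c + 1) * v := by rw [hudef, hvdef]; push_cast; ring
        rw [e]; exact hlt)
      convert this using 1 <;> ring

lemma comb_mul (ω R : ℝ) (P : ℤ → ℤ → Prop)
    (hadd : ∀ n p n' p', P n p → P n' p' → |((n + n' : ℤ) : ℝ) * ω - ((p + p' : ℤ) : ℝ)| < R →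
      P (n + n') (p + p'))
    (n p : ℤ) (h : P n p) :
    ∀ k : ℕ, ((k : ℝ) + 1) * |(n : ℝ) * ω - p| < R → P ((k + 1) * n) ((k + 1) * p) := by
  intro k
  induction k with
  | zero => intro _; simpa using h
  | succ k ih =>
    intro hlt
    push_cast at hlt ⊢
    have h0 := abs_nonneg ((n : ℝ) * ω - p)
    have hk : (0 : ℝ) ≤ k := Nat.cast_nonneg k
    have h1 := ih (by nlinarith)
    have := hadd _ _ _ _ h1 h (by
      have e : ((((k : ℤ) + 1) * n + n : ℤ) : ℝ) * ω - ((((k : ℤ) + 1) * p + p : ℤ) : ℝ)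
        = ((k : ℝ) + 1 + 1) * ((n : ℝ) * ω - p) := by push_cast; ring
      rw [e, abs_mul, abs_of_nonneg (by positivity)]; exact hlt)
    convert this using 1 <;> ring

lemma comb (ω R : ℝ) (hω : Irrational ω) (hR : 0 < R) (hR1 : R ≤ 1) (P : ℤ → ℤ → Prop)
    (h0 : ¬ P 0 0)
    (hb : ∀ n p : ℤ, P n p → |(n : ℝ) * ω - p| < R)
    (hadd : ∀ n p n' p', P n p → P n' p' → |((n + n' : ℤ) : ℝ) * ω - ((p + p' : ℤ) : ℝ)| < R →
      P (n + n') (p + p'))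
    (htri : ∀ n p : ℤ, |(n : ℝ) * ω - p| < R → (n ≠ 0 ∨ p ≠ 0) → P n p ∨ P (-n) (-p)) :
    (∀ n p : ℤ, P n p → 0 < (n : ℝ) * ω - p) ∨ (∀ n p : ℤ, P n p → (n : ℝ) * ω - p < 0) ∨
    ∃ R' : ℝ, 0 < R' ∧ R' ≤ R ∧ ∃ N : ℕ, 1 ≤ N ∧
      ((∀ n p : ℤ, (N : ℤ) ≤ n → |(n : ℝ) * ω - p| < R' → P n p) ∨
       (∀ n p : ℤ, (N : ℤ) ≤ n → |(n : ℝ) * ω - p| < R' → P (-n) (-p))) := by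
  have hne : ∀ n p : ℤ, P n p → (n : ℝ) * ω - p ≠ 0 := by
    intro n p hP h
    by_cases hn : n = 0
    · subst hn
      have : p = 0 := by simpa using h
      subst this
      exact h0 hP
    · exact (hω.intCast_mul hn).ne_int p (by linarith)
  by_contra hcon
  push Not at hcon
  obtain ⟨⟨n₂, p₂, h₂, hv⟩, ⟨n₁, p₁, h₁, hu⟩, hcon⟩ := hcon
  replace hv := lt_of_le_of_ne hv (hne _ _ h₂)
  replace hu := lt_of_le_of_ne hu (hne _ _ h₁).symm
  have hu' := (abs_lt.1 (hb _ _ h₁)).2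
  have hv' := (abs_lt.1 (hb _ _ h₂)).1
  have walk := comb_walk ω R P hadd n₁ p₁ n₂ p₂ h₁ h₂ hu hv hu' hv'
  have walkZ : ∀ a b : ℤ, 0 < a → 0 < b →
      |(a : ℝ) * ((n₁ : ℝ) * ω - p₁) + b * ((n₂ : ℝ) * ω - p₂)| < R →
      P (a * n₁ + b * n₂) (a * p₁ + b * p₂) := by
    intro a b ha hb h
    lift a to ℕ using ha.le
    lift b to ℕ using hb.le
    exact walk (a + b - 1) a b (by omega) (by exact_mod_cast h)
  set u := (n₁ : ℝ) * ω - p₁ with hudef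
  set v := (n₂ : ℝ) * ω - p₂ with hvdef
  obtain ⟨N₁, hN₁⟩ := exists_nat_gt (|(n₂ : ℝ)| / (-v))
  obtain ⟨N₂, hN₂⟩ := exists_nat_gt (|(n₁ : ℝ)| / u)
  rw [div_lt_iff₀ (by linarith)] at hN₁
  rw [div_lt_iff₀ hu] at hN₂
  have key : ∀ n p : ℤ, ((N₁ + N₂ + 1 : ℕ) : ℤ) ≤ n → |(n : ℝ) * ω - p| < 1 →
      0 < n * p₂ - n₂ * p ∧ 0 < n₁ * p - p₁ * n := by
    intro n p hn hα
    have hn' : (N₁ : ℝ) + N₂ + 1 ≤ n := by exact_mod_cast hn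
    have e1 : ((n * p₂ - n₂ * p : ℤ) : ℝ) = n₂ * ((n : ℝ) * ω - p) - v * n := by
      rw [hvdef]; push_cast; ring
    have e2 : ((n₁ * p - p₁ * n : ℤ) : ℝ) = u * n - n₁ * ((n : ℝ) * ω - p) := by
      rw [hudef]; push_cast; ring
    have b1 : |(n₂ : ℝ) * ((n : ℝ) * ω - p)| ≤ |(n₂ : ℝ)| := by
      rw [abs_mul]; exact mul_le_of_le_one_right (abs_nonneg _) hα.le
    have b2 : |(n₁ : ℝ) * ((n : ℝ) * ω - p)| ≤ |(n₁ : ℝ)| := by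
      rw [abs_mul]; exact mul_le_of_le_one_right (abs_nonneg _) hα.le
    have b1' := (abs_le.1 b1).1
    have b2' := (abs_le.1 b2).2
    have c1 : (0 : ℝ) ≤ N₁ := Nat.cast_nonneg _
    have c2 : (0 : ℝ) ≤ N₂ := Nat.cast_nonneg _
    constructor
    · have : (0 : ℝ) < ((n * p₂ - n₂ * p : ℤ) : ℝ) := by rw [e1]; nlinarith
      exact_mod_cast this
    · have : (0 : ℝ) < ((n₁ * p - p₁ * n : ℤ) : ℝ) := by rw [e2]; nlinarith
      exact_mod_cast this
  set D : ℤ := n₁ * p₂ - n₂ * p₁ with hD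
  have walkD : ∀ n p : ℤ, ((N₁ + N₂ + 1 : ℕ) : ℤ) ≤ n → |(n : ℝ) * ω - p| < 1 →
      |(D : ℝ)| * |(n : ℝ) * ω - p| < R → P (D * n) (D * p) := by
    intro n p hn h1 hlt
    obtain ⟨ha, hb⟩ := key n p hn h1
    have := walkZ _ _ ha hb (by
      have e : ((n * p₂ - n₂ * p : ℤ) : ℝ) * u + ((n₁ * p - p₁ * n : ℤ) : ℝ) * v
        = D * ((n : ℝ) * ω - p) := by rw [hudef, hvdef, hD]; push_cast; ring
      rw [e, abs_mul]; exact hlt)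
    convert this using 1 <;> rw [hD] <;> ring
  have hD0 : D ≠ 0 := by
    intro hD0
    have := walkD ((N₁ + N₂ + 1 : ℕ) : ℤ) ⌊(((N₁ + N₂ + 1 : ℕ) : ℤ) : ℝ) * ω⌋ le_rfl
      (by
        have := Int.fract_lt_one ((((N₁ + N₂ + 1 : ℕ) : ℤ) : ℝ) * ω)
        have h' := Int.fract_nonneg ((((N₁ + N₂ + 1 : ℕ) : ℤ) : ℝ) * ω)
        rw [Int.self_sub_floor, abs_of_nonneg h']; exact this)
      (by rw [hD0]; simpa using hR)
    rw [hD0] at this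
    simp only [zero_mul] at this
    exact h0 this
  have hDpos : (1 : ℝ) ≤ |(D : ℝ)| := by
    have := Int.one_le_abs hD0
    exact_mod_cast this
  obtain ⟨d, hd⟩ : ∃ d : ℕ, |D| = d + 1 := by
    have := Int.one_le_abs hD0
    exact ⟨(|D| - 1).toNat, by omega⟩
  have hdR : |(D : ℝ)| = (d : ℝ) + 1 := by exact_mod_cast hd
  obtain ⟨hc1, hc2⟩ := hcon (R / |(D : ℝ)|) (by positivity)
    (div_le_self hR.le hDpos) (N₁ + N₂ + 1) (by omega)
  have conv : ∀ n p : ℤ, |(n : ℝ) * ω - p| < R / |(D : ℝ)| →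
      |(D : ℝ)| * |(n : ℝ) * ω - p| < R ∧ |(n : ℝ) * ω - p| < R := by
    intro n p h
    have h' := h
    rw [lt_div_iff₀ (by linarith), mul_comm] at h
    exact ⟨h, h'.trans_le (div_le_self hR.le hDpos)⟩
  have nz : ∀ n : ℤ, ((N₁ + N₂ + 1 : ℕ) : ℤ) ≤ n → n ≠ 0 := by intro n hn; push_cast at hn; omega
  have kill : ∀ n p : ℤ, P n p → P (-n) (-p) → False := by
    intro n p h h'
    have := hadd _ _ _ _ h h' (by simpa using hR)
    simp only [add_neg_cancel] at this
    exact h0 this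
  rcases lt_or_gt_of_ne hD0 with hDs | hDs
  · obtain ⟨n, p, hn, hlt, hP⟩ := hc2
    obtain ⟨q1, q2⟩ := conv n p hlt
    have w := walkD n p hn (q2.trans_le hR1) q1
    rcases htri n p q2 (Or.inl (nz n hn)) with h | h
    · have m := comb_mul ω R P hadd n p h d (by rw [← hdR]; exact q1)
      have : ((d : ℤ) + 1) = -D := by rw [← hd, abs_of_neg hDs]
      rw [this] at m
      exact kill _ _ w (by convert m using 1 <;> ring)
    · exact hP h
  · obtain ⟨n, p, hn, hlt, hP⟩ := hc1
    obtain ⟨q1, q2⟩ := conv n p hlt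
    have w := walkD n p hn (q2.trans_le hR1) q1
    rcases htri n p q2 (Or.inl (nz n hn)) with h | h
    · exact hP h
    · have m := comb_mul ω R P hadd _ _ h d (by
        rw [← hdR]
        have e : (((-n : ℤ) : ℝ) * ω - ((-p : ℤ) : ℝ)) = -((n : ℝ) * ω - p) := by push_cast; ring
        rw [e, abs_neg]; exact q1)
      have : ((d : ℤ) + 1) = D := by rw [← hd, abs_of_pos hDs]
      rw [this] at m
      exact kill _ _ w (by convert m using 1 <;> ring)

/-! ### The skew product as a homeomorphism -/

lemma skew_bij {ω : ℝ} {F : T1 → ℝ → ℝ} (hF : IsQpfLift ω F) :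
    Function.Bijective (skew ω F) := by
  constructor
  · rintro ⟨θ, x⟩ ⟨θ', x'⟩ h
    simp only [skew, Prod.mk.injEq, add_left_inj] at h
    obtain ⟨rfl, h⟩ := h
    rw [(hF.mono θ).injective h]
  · rintro ⟨θ, y⟩
    obtain ⟨x, hx⟩ := hF.surj (θ - (ω : T1)) y
    exact ⟨(θ - (ω : T1), x), by simp [skew, hx]⟩

lemma skew_cont {ω : ℝ} {F : T1 → ℝ → ℝ} (hF : IsQpfLift ω F) : Continuous (skew ω F) :=
  Continuous.prodMk (by fun_prop) hF.cont

/-- The inverse of the skew product is continuous. -/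
lemma skew_symm_cont {ω : ℝ} {F : T1 → ℝ → ℝ} (hF : IsQpfLift ω F) :
    Continuous (Equiv.ofBijective _ (skew_bij hF)).symm := by
  set e := Equiv.ofBijective _ (skew_bij hF) with he
  have e1 : ∀ q, (e.symm q).1 = q.1 - (ω : T1) := by
    intro q
    have : e (e.symm q) = q := e.apply_symm_apply q
    have h2 : (e.symm q).1 + (ω : T1) = q.1 := congrArg Prod.fst this
    rw [← h2]; abel
  have e2 : ∀ q, F (q.1 - (ω : T1)) (e.symm q).2 = q.2 := by
    intro q
    have : e (e.symm q) = q := e.apply_symm_apply q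
    have h2 : F (e.symm q).1 (e.symm q).2 = q.2 := congrArg Prod.snd this
    rwa [e1] at h2
  have c2 : Continuous fun q => (e.symm q).2 := by
    rw [continuous_iff_continuousAt]
    intro q
    have hcont : ∀ c : ℝ, Continuous fun q' : T1 × ℝ => F (q'.1 - (ω : T1)) c := fun c =>
      hF.cont.comp (Continuous.prodMk (by fun_prop) continuous_const)
    rw [ContinuousAt, tendsto_order]
    constructor
    · intro a ha
      have h1 : F (q.1 - (ω : T1)) a < q.2 := by
        rw [← e2 q]; exact hF.mono _ ha
      filter_upwards [(hcont a).continuousAt.eventually_lt continuous_snd.continuousAt h1] with q' h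
      rw [← e2 q'] at h
      exact (hF.mono _).lt_iff_lt.1 h
    · intro a ha
      have h1 : q.2 < F (q.1 - (ω : T1)) a := by
        rw [← e2 q]; exact hF.mono _ ha
      filter_upwards [continuous_snd.continuousAt.eventually_lt (hcont a).continuousAt h1] with q' h
      rw [← e2 q'] at h
      exact (hF.mono _).lt_iff_lt.1 h
  have : (e.symm : T1 × ℝ → T1 × ℝ) = fun q => (q.1 - (ω : T1), (e.symm q).2) := by
    funext q
    exact Prod.ext (e1 q) rfl
  rw [this]
  exact Continuous.prodMk (by fun_prop) c2

/-- The skew product as a homeomorphism. -/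
def skewH {ω : ℝ} {F : T1 → ℝ → ℝ} (hF : IsQpfLift ω F) : (T1 × ℝ) ≃ₜ (T1 × ℝ) where
  toEquiv := Equiv.ofBijective _ (skew_bij hF)
  continuous_toFun := skew_cont hF
  continuous_invFun := skew_symm_cont hF

lemma skewH_apply {ω : ℝ} {F : T1 → ℝ → ℝ} (hF : IsQpfLift ω F) (q : T1 × ℝ) :
    skewH hF q = skew ω F q := rfl

lemma skewH_pow {ω : ℝ} {F : T1 → ℝ → ℝ} (hF : IsQpfLift ω F) (n : ℕ) (q : T1 × ℝ) :
    (skewH hF ^ n) q = (skew ω F)^[n] q := by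
  induction n generalizing q with
  | zero => rfl
  | succ n ih => rw [pow_succ, Homeomorph.mul_apply, ih, Function.iterate_succ_apply]; rfl

lemma skew_iter {ω : ℝ} {F : T1 → ℝ → ℝ} (n : ℕ) (θ : T1) (x : ℝ) :
    (skew ω F)^[n] (θ, x) = (θ + n • (ω : T1), fiberIter ω F n θ x) := by
  induction n generalizing θ x with
  | zero => simp [fiberIter]
  | succ n ih =>
    rw [Function.iterate_succ_apply, skew, ih, fiberIter, succ_nsmul' (ω : T1) n, add_assoc]

/-- Iterates of the skew product are fibrewise increasing over a rotation. -/
lemma skewH_zpow_aux {ω : ℝ} {F : T1 → ℝ → ℝ} (hF : IsQpfLift ω F) (n : ℤ) :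
    (∀ q, ((skewH hF ^ n) q).1 = q.1 + n • (ω : T1)) ∧
    (∀ θ x y, ((skewH hF ^ n) (θ, x)).2 < ((skewH hF ^ n) (θ, y)).2 ↔ x < y) := by
  have hs : ∀ q, ((skewH hF) q).1 = q.1 + (ω : T1) := fun q => rfl
  have hs' : ∀ q, ((skewH hF).symm q).1 = q.1 - (ω : T1) := by
    intro q
    have := hs ((skewH hF).symm q)
    rw [Homeomorph.apply_symm_apply] at this
    rw [this]; abel
  have hm : ∀ q q' : T1 × ℝ, q.1 = q'.1 → (((skewH hF) q).2 < ((skewH hF) q').2 ↔ q.2 < q'.2) := by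
    rintro ⟨θ, x⟩ ⟨θ', y⟩ h
    simp only at h
    subst h
    exact (hF.mono θ).lt_iff_lt
  have hm' : ∀ q q' : T1 × ℝ, q.1 = q'.1 →
      (((skewH hF).symm q).2 < ((skewH hF).symm q').2 ↔ q.2 < q'.2) := by
    intro q q' h
    rw [← hm _ _ (by rw [hs', hs', h]), Homeomorph.apply_symm_apply, Homeomorph.apply_symm_apply]
  induction n with
  | zero => simp
  | succ n ih =>
    rw [add_comm, zpow_add, zpow_one]
    constructor
    · intro q
      rw [Homeomorph.mul_apply, hs, ih.1, add_smul, one_smul]; abel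
    · intro θ x y
      rw [Homeomorph.mul_apply, Homeomorph.mul_apply, hm _ _ (by rw [ih.1, ih.1]), ih.2]
  | pred n ih =>
    rw [show -(n : ℤ) - 1 = -1 + -(n : ℤ) by ring, zpow_add, zpow_neg_one]
    constructor
    · intro q
      rw [Homeomorph.mul_apply, Homeomorph.inv_apply, hs', ih.1, add_smul, neg_one_smul]; abel
    · intro θ x y
      rw [Homeomorph.mul_apply, Homeomorph.mul_apply, Homeomorph.inv_apply, Homeomorph.inv_apply,
        hm' _ _ (by rw [ih.1, ih.1]), ih.2]

/-- The image under the `n`-th iterate of the constant curve of height `x`. -/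
def cur {ω : ℝ} {F : T1 → ℝ → ℝ} (hF : IsQpfLift ω F) (x : ℝ) (n : ℤ) (θ : T1) : ℝ :=
  ((skewH hF ^ n) (θ - n • (ω : T1), x)).2

section cur
variable {ω : ℝ} {F : T1 → ℝ → ℝ} (hF : IsQpfLift ω F)

lemma cur_eq (x : ℝ) (n : ℤ) (θ : T1) :
    (skewH hF ^ n) (θ - n • (ω : T1), x) = (θ, cur hF x n θ) := by
  refine Prod.ext ?_ rfl
  rw [(skewH_zpow_aux hF n).1]; simp

lemma cur_cont (x : ℝ) (n : ℤ) : Continuous (cur hF x n) :=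
  continuous_snd.comp ((skewH hF ^ n).continuous.comp
    (Continuous.prodMk (by fun_prop) continuous_const))

lemma cur_zero (x : ℝ) (θ : T1) : cur hF x 0 θ = x := by simp [cur]

lemma cur_lt {x y : ℝ} (h : x < y) (n : ℤ) (θ : T1) : cur hF x n θ < cur hF y n θ :=
  ((skewH_zpow_aux hF n).2 _ _ _).2 h

lemma cur_shift (x : ℝ) (n m : ℤ) (θ : T1) :
    (skewH hF ^ m) (θ, cur hF x n θ) = (θ + m • (ω : T1), cur hF x (n + m) (θ + m • (ω : T1))) := by
  rw [← cur_eq, ← cur_eq, ← Homeomorph.mul_apply, ← zpow_add, add_comm m n]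
  congr 2
  rw [add_smul]; abel

lemma cur_shift_lt (x y : ℝ) (n n' m : ℤ) (θ : T1) :
    cur hF x (n + m) (θ + m • (ω : T1)) < cur hF y (n' + m) (θ + m • (ω : T1)) ↔
      cur hF x n θ < cur hF y n' θ := by
  have h1 := congrArg Prod.snd (cur_shift hF x n m θ)
  have h2 := congrArg Prod.snd (cur_shift hF y n' m θ)
  simp only at h1 h2
  rw [← h1, ← h2, (skewH_zpow_aux hF m).2]

lemma cur_F (x : ℝ) (n : ℤ) (θ : T1) :
    F θ (cur hF x n θ) = cur hF x (n + 1) (θ + (ω : T1)) := by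
  have := congrArg Prod.snd (cur_shift hF x n 1 θ)
  simpa [skewH_apply, skew] using this

lemma cur_fiberIter (x : ℝ) (n : ℤ) (k : ℕ) (θ : T1) (y : ℝ) :
    (cur hF x (n + k) (θ + k • (ω : T1)) < fiberIter ω F k θ y ↔ cur hF x n θ < y) ∧
    (fiberIter ω F k θ y < cur hF x (n + k) (θ + k • (ω : T1)) ↔ y < cur hF x n θ) := by
  have h1 := congrArg Prod.snd (cur_shift hF x n k θ)
  simp only [natCast_zsmul] at h1
  have h2 : ((skewH hF ^ (k : ℤ)) (θ, y)).2 = fiberIter ω F k θ y := by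
    rw [zpow_natCast, skewH_pow, skew_iter]
  rw [← h1, ← h2, (skewH_zpow_aux hF k).2, (skewH_zpow_aux hF k).2]
  exact ⟨Iff.rfl, Iff.rfl⟩

end cur

/-! ### Strips -/

lemma strip_fiber {ω : ℝ} {F : T1 → ℝ → ℝ} {A : Set (T1 × ℝ)} (hA : IsInvStrip ω F A) (θ : T1) :
    phiInf A θ ≤ phiSup A θ ∧ ∀ x, (θ, x) ∈ A ↔ phiInf A θ ≤ x ∧ x ≤ phiSup A θ := by
  obtain ⟨a, b, hab, h⟩ := hA.2.2 θ
  have h1 : phiSup A θ = b := by rw [phiSup, h, csSup_Icc hab]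
  have h2 : phiInf A θ = a := by rw [phiInf, h, csInf_Icc hab]
  rw [h1, h2]
  refine ⟨hab, fun x => ?_⟩
  have : x ∈ {x : ℝ | (θ, x) ∈ A} ↔ x ∈ Set.Icc a b := by rw [h]
  exact this

lemma strip_inv {ω : ℝ} {F : T1 → ℝ → ℝ} (hF : IsQpfLift ω F) {A : Set (T1 × ℝ)}
    (hA : IsInvStrip ω F A) (θ : T1) :
    phiSup A (θ + (ω : T1)) = F θ (phiSup A θ) ∧ phiInf A (θ + (ω : T1)) = F θ (phiInf A θ) := by
  have hmem : ∀ θ x, (θ + (ω : T1), F θ x) ∈ A ↔ (θ, x) ∈ A := by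
    intro θ x
    constructor
    · intro h
      rw [← hA.2.1] at h
      obtain ⟨q, hq, he⟩ := h
      have : q = (θ, x) := (skew_bij hF).injective he
      rwa [← this]
    · intro h
      rw [← hA.2.1]
      exact ⟨(θ, x), h, rfl⟩
  obtain ⟨l0, h0⟩ := strip_fiber hA θ
  obtain ⟨l1, h1⟩ := strip_fiber hA (θ + (ω : T1))
  obtain ⟨s, hs⟩ := hF.surj θ (phiSup A (θ + (ω : T1)))
  obtain ⟨i, hi⟩ := hF.surj θ (phiInf A (θ + (ω : T1)))
  have m1 := (h1 _).1 ((hmem θ _).2 ((h0 (phiSup A θ)).2 ⟨l0, le_rfl⟩))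
  have m2 := (h1 _).1 ((hmem θ _).2 ((h0 (phiInf A θ)).2 ⟨le_rfl, l0⟩))
  have m3 := (h0 _).1 ((hmem θ s).1 (by rw [hs]; exact (h1 _).2 ⟨l1, le_rfl⟩))
  have m4 := (h0 _).1 ((hmem θ i).1 (by rw [hi]; exact (h1 _).2 ⟨le_rfl, l1⟩))
  constructor
  · refine le_antisymm ?_ m1.2
    rw [← hs]; exact (hF.mono θ).monotone m3.2
  · refine le_antisymm m2.1 ?_
    rw [← hi]; exact (hF.mono θ).monotone m4.1

/-- The gap region between the strips. -/
def gapC (A B : Set (T1 × ℝ)) : Set (T1 × ℝ) :=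
  {p : T1 × ℝ | phiSup A p.1 < p.2 ∧ p.2 < phiInf B p.1}

lemma gapC_inv {ω : ℝ} {F : T1 → ℝ → ℝ} (hF : IsQpfLift ω F) {A B : Set (T1 × ℝ)}
    (hA : IsInvStrip ω F A) (hB : IsInvStrip ω F B) (q : T1 × ℝ) :
    skewH hF q ∈ gapC A B ↔ q ∈ gapC A B := by
  obtain ⟨θ, x⟩ := q
  simp only [gapC, skewH_apply, skew, Set.mem_ofPred_eq]
  rw [(strip_inv hF hA θ).1, (strip_inv hF hB θ).2, (hF.mono θ).lt_iff_lt, (hF.mono θ).lt_iff_lt]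

lemma gapC_inv_zpow {ω : ℝ} {F : T1 → ℝ → ℝ} (hF : IsQpfLift ω F) {A B : Set (T1 × ℝ)}
    (hA : IsInvStrip ω F A) (hB : IsInvStrip ω F B) (n : ℤ) (q : T1 × ℝ) :
    (skewH hF ^ n) q ∈ gapC A B ↔ q ∈ gapC A B := by
  induction n with
  | zero => simp
  | succ n ih => rw [add_comm, zpow_add, zpow_one, Homeomorph.mul_apply, gapC_inv hF hA hB, ih]
  | pred n ih =>
    rw [show -(n : ℤ) - 1 = -1 + -(n : ℤ) by ring, zpow_add, zpow_neg_one,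
      Homeomorph.mul_apply, Homeomorph.inv_apply, ← gapC_inv hF hA hB,
      Homeomorph.apply_symm_apply, ih]

lemma gapC_bdd {ω : ℝ} {F : T1 → ℝ → ℝ} {A B : Set (T1 × ℝ)}
    (hA : IsInvStrip ω F A) (hB : IsInvStrip ω F B) :
    ∃ a b : ℝ, gapC A B ⊆ Set.univ ×ˢ Set.Icc a b := by
  obtain ⟨a, ha⟩ := (hA.1.image continuous_snd).bddBelow
  obtain ⟨b, hb⟩ := (hB.1.image continuous_snd).bddAbove
  refine ⟨a, b, ?_⟩
  rintro ⟨θ, x⟩ ⟨h1, h2⟩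
  simp only at h1 h2
  obtain ⟨l0, h0⟩ := strip_fiber hA θ
  obtain ⟨l0', h0'⟩ := strip_fiber hB θ
  have m1 := ha ⟨_, (h0 (phiSup A θ)).2 ⟨l0, le_rfl⟩, rfl⟩
  have m2 := hb ⟨_, (h0' (phiInf B θ)).2 ⟨le_rfl, l0'⟩, rfl⟩
  simp only at m1 m2
  exact ⟨trivial, by linarith, by linarith⟩

/-! ### The three cases -/

lemma dense_hit {ω : ℝ} (hω : Irrational ω) {U : Set T1} (hU : IsOpen U) (hne : U.Nonempty)
    (θ : T1) : ∃ n : ℤ, θ - n • (ω : T1) ∈ U := by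
  have hd : DenseRange (fun n : ℤ => n • (ω : T1)) := by
    rw [AddCircle.denseRange_zsmul_coe_iff]; simpa using hω
  obtain ⟨u, hu⟩ := hne
  obtain ⟨n, hn⟩ := hd.exists_mem_open (s := (fun y : T1 => θ - y) ⁻¹' U)
    (hU.preimage (by fun_prop)) ⟨θ - u, by simpa using hu⟩
  exact ⟨n, hn⟩

lemma cur_mem {ω : ℝ} {F : T1 → ℝ → ℝ} (hF : IsQpfLift ω F) {A B : Set (T1 × ℝ)}
    (hA : IsInvStrip ω F A) (hB : IsInvStrip ω F B) {x : ℝ} {n : ℤ} {θ : T1}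
    (h : (θ - n • (ω : T1), x) ∈ gapC A B) :
    phiSup A θ < cur hF x n θ ∧ cur hF x n θ < phiInf B θ := by
  rw [← gapC_inv_zpow hF hA hB n, cur_eq] at h
  exact h

lemma strip_case {ω : ℝ} (hω : Irrational ω) {F : T1 → ℝ → ℝ} (hF : IsQpfLift ω F)
    {A B : Set (T1 × ℝ)} (hA : IsInvStrip ω F A) (hB : IsInvStrip ω F B)
    (hgap : ¬ ∃ S : Set (T1 × ℝ), IsInvStrip ω F S ∧ StripLt A S ∧ StripLt S B)
    (x₁ x₂ : ℝ) (U₁ U₂ : Set T1) (hU₁ : IsOpen U₁) (hU₂ : IsOpen U₂)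
    (hn₁ : U₁.Nonempty) (hn₂ : U₂.Nonempty)
    (hin₁ : ∀ θ ∈ U₁, (θ, x₂) ∈ gapC A B) (hin₂ : ∀ θ ∈ U₂, (θ, x₁) ∈ gapC A B)
    (hsep : ∀ (θ : T1) (n m : ℤ), θ - n • (ω : T1) ∈ U₁ → θ - m • (ω : T1) ∈ U₂ →
      cur hF x₂ n θ < cur hF x₁ m θ) : False := by
  apply hgap
  set S : Set (T1 × ℝ) := {q | (∀ n : ℤ, q.1 - n • (ω : T1) ∈ U₁ → cur hF x₂ n q.1 ≤ q.2) ∧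
    (∀ m : ℤ, q.1 - m • (ω : T1) ∈ U₂ → q.2 ≤ cur hF x₁ m q.1)} with hS
  have hSmem : ∀ θ x, (θ, x) ∈ S ↔ (∀ n : ℤ, θ - n • (ω : T1) ∈ U₁ → cur hF x₂ n θ ≤ x) ∧
    (∀ m : ℤ, θ - m • (ω : T1) ∈ U₂ → x ≤ cur hF x₁ m θ) := fun θ x => Iff.rfl
  have hSC : ∀ θ x, (θ, x) ∈ S → phiSup A θ < x ∧ x < phiInf B θ := by
    intro θ x h
    obtain ⟨n, hn⟩ := dense_hit hω hU₁ hn₁ θ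
    obtain ⟨m, hm⟩ := dense_hit hω hU₂ hn₂ θ
    exact ⟨(cur_mem hF hA hB (hin₁ _ hn)).1.trans_le (h.1 n hn),
      (h.2 m hm).trans_lt (cur_mem hF hA hB (hin₂ _ hm)).2⟩
  have hclosed : IsClosed S := by
    have : S = (⋂ n : ℤ, {q : T1 × ℝ | q.1 - n • (ω : T1) ∈ U₁ → cur hF x₂ n q.1 ≤ q.2}) ∩
        (⋂ m : ℤ, {q : T1 × ℝ | q.1 - m • (ω : T1) ∈ U₂ → q.2 ≤ cur hF x₁ m q.1}) := by
      ext q; simp [hS]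
    rw [this]
    refine IsClosed.inter (isClosed_iInter fun n => ?_) (isClosed_iInter fun n => ?_)
    · exact isClosed_imp (hU₁.preimage (f := fun q : T1 × ℝ => q.1 - n • (ω : T1)) (by fun_prop))
        (isClosed_le ((cur_cont hF x₂ n).comp continuous_fst) continuous_snd)
    · exact isClosed_imp (hU₂.preimage (f := fun q : T1 × ℝ => q.1 - n • (ω : T1)) (by fun_prop))
        (isClosed_le continuous_snd ((cur_cont hF x₁ n).comp continuous_fst))
  have hfib : ∀ θ : T1, ∃ a b : ℝ, a ≤ b ∧ {x : ℝ | (θ, x) ∈ S} = Set.Icc a b := by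
    intro θ
    set U : Set ℝ := {x | ∃ n : ℤ, θ - n • (ω : T1) ∈ U₁ ∧ cur hF x₂ n θ = x} with hU
    set V : Set ℝ := {x | ∃ n : ℤ, θ - n • (ω : T1) ∈ U₂ ∧ cur hF x₁ n θ = x} with hV
    obtain ⟨n, hn⟩ := dense_hit hω hU₁ hn₁ θ
    obtain ⟨m, hm⟩ := dense_hit hω hU₂ hn₂ θ
    have hUV : ∀ u ∈ U, ∀ v ∈ V, u ≤ v := by
      rintro _ ⟨n, hn, rfl⟩ _ ⟨m, hm, rfl⟩
      exact (hsep θ n m hn hm).le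
    have hUne : U.Nonempty := ⟨_, n, hn, rfl⟩
    have hVne : V.Nonempty := ⟨_, m, hm, rfl⟩
    have hUb : BddAbove U := ⟨_, fun u hu => hUV u hu _ ⟨m, hm, rfl⟩⟩
    have hVb : BddBelow V := ⟨_, fun v hv => hUV _ ⟨n, hn, rfl⟩ v hv⟩
    refine ⟨sSup U, sInf V, ?_, ?_⟩
    · exact csSup_le hUne fun u hu => le_csInf hVne fun v hv => hUV u hu v hv
    · ext x
      have : x ∈ {x : ℝ | (θ, x) ∈ S} ↔ (θ, x) ∈ S := Iff.rfl
      rw [this, hSmem, Set.mem_Icc, csSup_le_iff hUb hUne, le_csInf_iff hVb hVne]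
      constructor
      · rintro ⟨h1, h2⟩
        refine ⟨?_, ?_⟩
        · rintro _ ⟨n, hn, rfl⟩; exact h1 n hn
        · rintro _ ⟨n, hn, rfl⟩; exact h2 n hn
      · rintro ⟨h1, h2⟩
        exact ⟨fun n hn => h1 _ ⟨n, hn, rfl⟩, fun n hn => h2 _ ⟨n, hn, rfl⟩⟩
  have hSinv : ∀ θ x, (θ + (ω : T1), F θ x) ∈ S ↔ (θ, x) ∈ S := by
    intro θ x
    have hsh : ∀ n : ℤ, θ + (ω : T1) - (n + 1) • (ω : T1) = θ - n • (ω : T1) := by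
      intro n; rw [add_smul, one_smul]; abel
    rw [hSmem, hSmem]
    constructor
    · rintro ⟨h1, h2⟩
      refine ⟨fun n hn => ?_, fun n hn => ?_⟩
      · have := h1 (n + 1) (by rwa [hsh])
        rwa [← cur_F, (hF.mono θ).le_iff_le] at this
      · have := h2 (n + 1) (by rwa [hsh])
        rwa [← cur_F, (hF.mono θ).le_iff_le] at this
    · rintro ⟨h1, h2⟩
      refine ⟨fun n hn => ?_, fun n hn => ?_⟩
      · obtain ⟨k, rfl⟩ : ∃ k, n = k + 1 := ⟨n - 1, by ring⟩
        rw [hsh] at hn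
        rw [← cur_F, (hF.mono θ).le_iff_le]; exact h1 k hn
      · obtain ⟨k, rfl⟩ : ∃ k, n = k + 1 := ⟨n - 1, by ring⟩
        rw [hsh] at hn
        rw [← cur_F, (hF.mono θ).le_iff_le]; exact h2 k hn
  have hinv : skew ω F '' S = S := by
    ext q
    constructor
    · rintro ⟨⟨θ, x⟩, h, rfl⟩
      exact (hSinv θ x).2 h
    · intro h
      obtain ⟨⟨θ, x⟩, rfl⟩ := (skew_bij hF).surjective q
      exact ⟨(θ, x), (hSinv θ x).1 h, rfl⟩
  obtain ⟨a, b, hab⟩ := gapC_bdd hA hB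
  have hcomp : IsCompact S :=
    (isCompact_univ.prod isCompact_Icc).of_isClosed_subset hclosed
      (fun q hq => hab (hSC q.1 q.2 hq))
  have hstrip : IsInvStrip ω F S := ⟨hcomp, hinv, hfib⟩
  refine ⟨S, hstrip, fun θ => ?_, fun θ => ?_⟩
  · obtain ⟨l, h⟩ := strip_fiber hstrip θ
    exact (hSC _ _ ((h _).2 ⟨le_rfl, l⟩)).1
  · obtain ⟨l, h⟩ := strip_fiber hstrip θ
    exact (hSC _ _ ((h _).2 ⟨l, le_rfl⟩)).2

lemma finite_cover {ω : ℝ} (hω : Irrational ω) {U : Set T1} (hU : IsOpen U) (hne : U.Nonempty) :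
    ∃ M : ℕ, ∀ θ : T1, ∃ k : ℤ, -(M : ℤ) ≤ k ∧ k ≤ M ∧ θ - k • (ω : T1) ∈ U := by
  obtain ⟨t, ht⟩ := (isCompact_univ (X := T1)).elim_finite_subcover
    (fun n : ℤ => (fun θ : T1 => θ - n • (ω : T1)) ⁻¹' U)
    (fun n => hU.preimage (by fun_prop))
    (fun θ _ => Set.mem_iUnion.2 (dense_hit hω hU hne θ))
  refine ⟨t.sup Int.natAbs, fun θ => ?_⟩
  have := ht (Set.mem_univ θ)
  simp only [Set.mem_iUnion, exists_prop] at this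
  obtain ⟨k, hk, hkU⟩ := this
  have hle : k.natAbs ≤ t.sup Int.natAbs := Finset.le_sup (f := Int.natAbs) hk
  exact ⟨k, by omega, by omega, hkU⟩

lemma curve_case_up {ω : ℝ} (hω : Irrational ω) {F : T1 → ℝ → ℝ} (hF : IsQpfLift ω F)
    {A B : Set (T1 × ℝ)} (hA : IsInvStrip ω F A) (hB : IsInvStrip ω F B)
    (x₁ x₂ : ℝ) (hx : x₁ < x₂) (U : Set T1) (hU : IsOpen U) (hne : U.Nonempty)
    (hin : ∀ θ ∈ U, (θ, x₁) ∈ gapC A B ∧ (θ, x₂) ∈ gapC A B) (N : ℕ) (hN : 1 ≤ N)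
    (hsep : ∀ (θ : T1) (k n : ℤ), θ - k • (ω : T1) ∈ U → θ - n • (ω : T1) ∈ U → k + N ≤ n →
      cur hF x₂ k θ < cur hF x₁ n θ) :
    ∃ γ : T1 → ℝ, Continuous γ ∧ (∀ θ, (θ, γ θ) ∈ gapC A B) ∧
      ∃ N : ℕ, 1 ≤ N ∧ ∀ θ, γ (θ + N • (ω : T1)) < fiberIter ω F N θ (γ θ) := by
  obtain ⟨M, hM⟩ := finite_cover hω hU hne
  obtain ⟨γ, hγ⟩ := exists_continuous_forall_mem_convex_of_local (X := T1) (E := ℝ)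
    (t := fun θ => {y | (∃ n : ℤ, -(M : ℤ) ≤ n ∧ θ - n • (ω : T1) ∈ U ∧ cur hF x₁ n θ < y) ∧
      (∀ n : ℤ, (N : ℤ) + M ≤ n → θ - n • (ω : T1) ∈ U → y < cur hF x₁ n θ) ∧
      phiSup A θ < y ∧ y < phiInf B θ})
    (by
      intro θ
      apply Set.OrdConnected.convex
      constructor
      rintro a ⟨⟨n, hn1, hn2, hn3⟩, ha2, ha3, ha4⟩ b ⟨⟨m, hm1, hm2, hm3⟩, hb2, hb3, hb4⟩ y ⟨hy1, hy2⟩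
      exact ⟨⟨n, hn1, hn2, hn3.trans_le hy1⟩, fun n h1 h2 => hy2.trans_lt (hb2 n h1 h2),
        ha3.trans_le hy1, hy2.trans_lt hb4⟩)
    (by
      intro θ
      obtain ⟨k, hk1, hk2, hk⟩ := hM θ
      refine ⟨(fun θ : T1 => θ - k • (ω : T1)) ⁻¹' U,
        (hU.preimage (by fun_prop)).mem_nhds hk, fun θ => (cur hF x₁ k θ + cur hF x₂ k θ) / 2,
        (((cur_cont hF x₁ k).add (cur_cont hF x₂ k)).div_const 2).continuousOn, ?_⟩
      intro θ' hθ'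
      have hlt := cur_lt hF hx k θ'
      have c1 := cur_mem hF hA hB (hin _ hθ').1
      have c2 := cur_mem hF hA hB (hin _ hθ').2
      refine ⟨⟨k, hk1, hθ', by linarith⟩, fun n hn hn' => ?_, by linarith, by linarith⟩
      have := hsep θ' k n hθ' hn' (by omega)
      linarith)
  refine ⟨γ, γ.continuous, fun θ => (hγ θ).2.2, N + 2 * M, by omega, fun θ => ?_⟩
  obtain ⟨n, hn1, hn2, hn3⟩ := (hγ θ).1
  have h1 := (cur_fiberIter hF x₁ n (N + 2 * M) θ (γ θ)).1.2 hn3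
  refine lt_trans ?_ h1
  refine (hγ (θ + (N + 2 * M) • (ω : T1))).2.1 _ (by push_cast; omega) ?_
  convert hn2 using 1
  rw [add_smul n, natCast_zsmul]; abel

lemma curve_case_down {ω : ℝ} (hω : Irrational ω) {F : T1 → ℝ → ℝ} (hF : IsQpfLift ω F)
    {A B : Set (T1 × ℝ)} (hA : IsInvStrip ω F A) (hB : IsInvStrip ω F B)
    (x₁ x₂ : ℝ) (hx : x₁ < x₂) (U : Set T1) (hU : IsOpen U) (hne : U.Nonempty)
    (hin : ∀ θ ∈ U, (θ, x₁) ∈ gapC A B ∧ (θ, x₂) ∈ gapC A B) (N : ℕ) (hN : 1 ≤ N)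
    (hsep : ∀ (θ : T1) (k n : ℤ), θ - k • (ω : T1) ∈ U → θ - n • (ω : T1) ∈ U → k + N ≤ n →
      cur hF x₂ n θ < cur hF x₁ k θ) :
    ∃ γ : T1 → ℝ, Continuous γ ∧ (∀ θ, (θ, γ θ) ∈ gapC A B) ∧
      ∃ N : ℕ, 1 ≤ N ∧ ∀ θ, fiberIter ω F N θ (γ θ) < γ (θ + N • (ω : T1)) := by
  obtain ⟨M, hM⟩ := finite_cover hω hU hne
  obtain ⟨γ, hγ⟩ := exists_continuous_forall_mem_convex_of_local (X := T1) (E := ℝ)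
    (t := fun θ => {y | (∃ n : ℤ, -(M : ℤ) ≤ n ∧ θ - n • (ω : T1) ∈ U ∧ y < cur hF x₂ n θ) ∧
      (∀ n : ℤ, (N : ℤ) + M ≤ n → θ - n • (ω : T1) ∈ U → cur hF x₂ n θ < y) ∧
      phiSup A θ < y ∧ y < phiInf B θ})
    (by
      intro θ
      apply Set.OrdConnected.convex
      constructor
      rintro a ⟨⟨n, hn1, hn2, hn3⟩, ha2, ha3, ha4⟩ b ⟨⟨m, hm1, hm2, hm3⟩, hb2, hb3, hb4⟩ y ⟨hy1, hy2⟩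
      exact ⟨⟨m, hm1, hm2, hy2.trans_lt hm3⟩, fun n h1 h2 => (ha2 n h1 h2).trans_le hy1,
        ha3.trans_le hy1, hy2.trans_lt hb4⟩)
    (by
      intro θ
      obtain ⟨k, hk1, hk2, hk⟩ := hM θ
      refine ⟨(fun θ : T1 => θ - k • (ω : T1)) ⁻¹' U,
        (hU.preimage (by fun_prop)).mem_nhds hk, fun θ => (cur hF x₁ k θ + cur hF x₂ k θ) / 2,
        (((cur_cont hF x₁ k).add (cur_cont hF x₂ k)).div_const 2).continuousOn, ?_⟩
      intro θ' hθ'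
      have hlt := cur_lt hF hx k θ'
      have c1 := cur_mem hF hA hB (hin _ hθ').1
      have c2 := cur_mem hF hA hB (hin _ hθ').2
      refine ⟨⟨k, hk1, hθ', by linarith⟩, fun n hn hn' => ?_, by linarith, by linarith⟩
      have := hsep θ' k n hθ' hn' (by omega)
      linarith)
  refine ⟨γ, γ.continuous, fun θ => (hγ θ).2.2, N + 2 * M, by omega, fun θ => ?_⟩
  obtain ⟨n, hn1, hn2, hn3⟩ := (hγ θ).1
  have h1 := (cur_fiberIter hF x₂ n (N + 2 * M) θ (γ θ)).2.2 hn3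
  refine lt_trans h1 ?_
  refine (hγ (θ + (N + 2 * M) • (ω : T1))).2.1 _ (by push_cast; omega) ?_
  convert hn2 using 1
  rw [add_smul n, natCast_zsmul]; abel

/-! ### Lifting to the real line -/

lemma coe_shift (ω t : ℝ) (n p : ℤ) :
    ((t - ((n : ℝ) * ω - p) : ℝ) : T1) = (t : T1) - n • (ω : T1) := by
  have h1 : ((n : ℝ) * ω : ℝ) = n • ω := by simp
  have h2 : (((p : ℝ) : ℝ) : T1) = 0 := by
    rw [AddCircle.coe_eq_zero_iff]; exact ⟨p, by simp⟩
  rw [AddCircle.coe_sub, AddCircle.coe_sub, h1, AddCircle.coe_zsmul, h2, sub_zero]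

lemma exists_shift (ω s s' : ℝ) (θ θ₀ : T1) (k n : ℤ) (h : θ - k • (ω : T1) = θ₀ + (s : T1))
    (h' : θ - n • (ω : T1) = θ₀ + (s' : T1)) :
    ∃ p : ℤ, ((n - k : ℤ) : ℝ) * ω - p = s - s' := by
  have : (((n - k : ℤ) : ℝ) * ω - (s - s') : ℝ) = (0 : T1) := by
    have h1 : (((n - k : ℤ) : ℝ) * ω : ℝ) = (n - k : ℤ) • ω := by simp
    rw [AddCircle.coe_sub, AddCircle.coe_sub, h1, AddCircle.coe_zsmul, sub_smul]
    have e1 : (s : T1) = θ - k • (ω : T1) - θ₀ := by rw [h]; abel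
    have e2 : (s' : T1) = θ - n • (ω : T1) - θ₀ := by rw [h']; abel
    rw [e1, e2]; abel
  rw [AddCircle.coe_eq_zero_iff] at this
  obtain ⟨p, hp⟩ := this
  refine ⟨p, ?_⟩
  simp only [zsmul_eq_mul, mul_one] at hp
  linarith

lemma box_exists {W : Set (T1 × ℝ)} (hWo : IsOpen W) (hWne : W.Nonempty) :
    ∃ (θ₀ : T1) (x₁ x₂ r : ℝ), x₁ < x₂ ∧ 0 < r ∧ r ≤ 1 / 2 ∧
      ∀ t x : ℝ, |t| < r → x₁ ≤ x → x ≤ x₂ → (θ₀ + (t : T1), x) ∈ W := by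
  obtain ⟨⟨θ₀, x₀⟩, h0⟩ := hWne
  have hc : Continuous fun q : ℝ × ℝ => ((θ₀ + (q.1 : T1), q.2) : T1 × ℝ) :=
    Continuous.prodMk (continuous_const.add ((AddCircle.continuous_mk' 1).comp continuous_fst))
      continuous_snd
  have ho := hWo.preimage hc
  obtain ⟨ε, hε, hb⟩ := Metric.isOpen_iff.1 ho (0, x₀) (by simpa using h0)
  refine ⟨θ₀, x₀ - ε / 2, x₀ + ε / 2, min ε (1 / 2), by linarith, by positivity,
    min_le_right _ _, fun t x ht h1 h2 => ?_⟩
  have : (t, x) ∈ Metric.ball ((0 : ℝ), x₀) ε := by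
    rw [Metric.mem_ball, Prod.dist_eq, max_lt_iff, Real.dist_eq, Real.dist_eq]
    refine ⟨by simpa using ht.trans_le (min_le_left _ _), ?_⟩
    rw [abs_lt]; constructor <;> simp only <;> linarith
  exact hb this

lemma isOpen_arc (θ₀ : T1) (a b : ℝ) : IsOpen ((fun t : ℝ => θ₀ + (t : T1)) '' Set.Ioo a b) := by
  have h1 : IsOpen ((fun t : ℝ => (t : T1)) '' Set.Ioo a b) :=
    QuotientAddGroup.isOpenMap_coe _ isOpen_Ioo
  have h2 := (Homeomorph.addLeft θ₀).isOpenMap _ h1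
  rw [Set.image_image] at h2
  exact h2

lemma wander_int {ω : ℝ} {F : T1 → ℝ → ℝ} (hF : IsQpfLift ω F) {W : Set (T1 × ℝ)}
    (hWand : ∀ n : ℕ, 1 ≤ n → ((skew ω F)^[n] '' W) ∩ W = ∅) (n : ℤ) (hn : n ≠ 0)
    (q : T1 × ℝ) (hq : q ∈ W) (hq' : (skewH hF ^ n) q ∈ W) : False := by
  rcases lt_or_gt_of_ne hn with h | h
  · obtain ⟨k, rfl⟩ : ∃ k : ℕ, n = -(k : ℤ) := ⟨n.natAbs, by omega⟩
    have hm : q ∈ ((skew ω F)^[k] '' W) ∩ W := by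
      refine ⟨⟨_, hq', ?_⟩, hq⟩
      rw [← skewH_pow hF, ← zpow_natCast, ← Homeomorph.mul_apply, ← zpow_add]
      simp
    rw [hWand k (by omega)] at hm
    exact hm
  · obtain ⟨k, rfl⟩ : ∃ k : ℕ, n = (k : ℤ) := ⟨n.natAbs, by omega⟩
    have hm : (skewH hF ^ (k : ℤ)) q ∈ ((skew ω F)^[k] '' W) ∩ W := by
      refine ⟨⟨q, hq, ?_⟩, hq'⟩
      rw [← skewH_pow hF, ← zpow_natCast]
    rw [hWand k (by omega)] at hm
    exact hm

lemma triple_overlap (r a b : ℝ) (ha : |a| < 2 * r) (hb : |b| < 2 * r) (hab : |a + b| < 2 * r) :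
    ∃ t : ℝ, |t| < r ∧ |t - a| < r ∧ |t - (a + b)| < r := by
  rw [abs_lt] at ha hb hab
  refine ⟨(max 0 (max a (a + b)) + min 0 (min a (a + b))) / 2, ?_, ?_, ?_⟩ <;>
  rw [abs_lt] <;>
  rcases max_cases a (a + b) with h1 | h1 <;> rcases min_cases a (a + b) with h2 | h2 <;>
  rcases max_cases 0 (max a (a + b)) with h3 | h3 <;>
  rcases min_cases 0 (min a (a + b)) with h4 | h4 <;> constructor <;> linarith

/-- Lemma 4.4: a wandering open set between two neighboring minimal
invariant strips produces a continuous curve in the gap that is mapped strictly above or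
strictly below itself by some iterate of `F`. -/
theorem wandering_set_gives_curve
    (ω : ℝ) (hω : Irrational ω)
    (F : T1 → ℝ → ℝ) (hF : IsQpfLift ω F)
    (A B : Set (T1 × ℝ))
    (hA : IsMinimalStrip ω F A) (hB : IsMinimalStrip ω F B) (hAB : StripLt A B)
    (hgap : ¬ ∃ S : Set (T1 × ℝ), IsInvStrip ω F S ∧ StripLt A S ∧ StripLt S B)
    (C : Set (T1 × ℝ))
    (hC : C = {p : T1 × ℝ | phiSup A p.1 < p.2 ∧ p.2 < phiInf B p.1})
    (W : Set (T1 × ℝ)) (hWo : IsOpen W) (hWne : W.Nonempty) (hWC : W ⊆ C)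
    (hWand : ∀ n : ℕ, 1 ≤ n → ((skew ω F)^[n] '' W) ∩ W = ∅) :
    ∃ γ : T1 → ℝ, Continuous γ ∧ (∀ θ, (θ, γ θ) ∈ C) ∧
      ∃ N : ℕ, 1 ≤ N ∧
        ((∀ θ, γ (θ + N • (ω : T1)) < fiberIter ω F N θ (γ θ)) ∨
         (∀ θ, fiberIter ω F N θ (γ θ) < γ (θ + N • (ω : T1)))) := by
  have hAs := hA.1
  have hBs := hB.1
  have hC' : C = gapC A B := hC
  subst hC'
  obtain ⟨θ₀, x₁, x₂, r, hx, hr, hr2, hbox⟩ := box_exists hWo hWne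
  have hdis : ∀ (n p : ℤ) (t : ℝ), n ≠ 0 → |t| < r → |t - ((n : ℝ) * ω - p)| < r →
      x₂ < cur hF x₁ n (θ₀ + (t : T1)) ∨ cur hF x₂ n (θ₀ + (t : T1)) < x₁ := by
    intro n p t hn ht ht'
    by_contra hcon
    push Not at hcon
    obtain ⟨h1, h2⟩ := hcon
    have hlt := cur_lt hF hx n (θ₀ + (t : T1))
    set y := max x₁ (cur hF x₁ n (θ₀ + (t : T1))) with hy
    have hyW : (θ₀ + (t : T1), y) ∈ W :=
      hbox t y ht (le_max_left _ _) (max_le hx.le h1)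
    have hy1 : cur hF x₁ n (θ₀ + (t : T1)) ≤ y := le_max_right _ _
    have hy2 : y ≤ cur hF x₂ n (θ₀ + (t : T1)) := max_le h2 hlt.le
    set q := (skewH hF ^ n).symm (θ₀ + (t : T1), y) with hq
    have hqe : (skewH hF ^ n) q = (θ₀ + (t : T1), y) := Homeomorph.apply_symm_apply _ _
    have hq1 : q.1 = θ₀ + (t : T1) - n • (ω : T1) := by
      have := (skewH_zpow_aux hF n).1 q
      rw [hqe] at this
      simp only at this
      rw [this]; abel
    have hqq : q = (θ₀ + (t : T1) - n • (ω : T1), q.2) := Prod.ext hq1 rfl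
    have hyq : y = cur hF q.2 n (θ₀ + (t : T1)) := by
      rw [cur, ← hqq, hqe]
    have hq3 : x₁ ≤ q.2 := by
      by_contra hlt'
      have := cur_lt hF (not_le.1 hlt') n (θ₀ + (t : T1))
      linarith
    have hq4 : q.2 ≤ x₂ := by
      by_contra hlt'
      have := cur_lt hF (not_le.1 hlt') n (θ₀ + (t : T1))
      linarith
    have hqW : q ∈ W := by
      rw [hqq]
      have := hbox _ q.2 ht' hq3 hq4
      rw [coe_shift] at this
      convert this using 2
      abel
    exact wander_int hF hWand n hn q hqW (by rw [hqe]; exact hyW)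
  set P : ℤ → ℤ → Prop := fun n p => |(n : ℝ) * ω - p| < 2 * r ∧
    ∀ t : ℝ, |t| < r → |t - ((n : ℝ) * ω - p)| < r → x₂ < cur hF x₁ n (θ₀ + (t : T1)) with hP
  have Pconv : ∀ (θ : T1) (k n p : ℤ) (s s' : ℝ), θ - k • (ω : T1) = θ₀ + (s : T1) →
      |s| < r → |s'| < r → ((n - k : ℤ) : ℝ) * ω - p = s - s' → P (n - k) p →
      cur hF x₂ k θ < cur hF x₁ n θ := by
    intro θ k n p s s' hθ hs hs' he hPn
    have h := hPn.2 s hs (by rw [he]; simpa using hs')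
    rw [← cur_zero hF x₂ (θ₀ + (s : T1)), ← cur_shift_lt hF _ _ _ _ k, ← hθ] at h
    simpa using h
  have h0 : ¬ P 0 0 := by
    intro h
    have := h.2 0 (by simpa using hr) (by simpa using hr)
    rw [cur_zero] at this
    linarith
  have htri : ∀ n p : ℤ, |(n : ℝ) * ω - p| < 2 * r → (n ≠ 0 ∨ p ≠ 0) → P n p ∨ P (-n) (-p) := by
    intro n p hlt hnp
    have hn : n ≠ 0 := by
      rintro rfl
      have hp : p ≠ 0 := by simpa using hnp
      have h1 : (1 : ℝ) ≤ |(p : ℝ)| := by exact_mod_cast Int.one_le_abs hp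
      simp only [Int.cast_zero, zero_mul, zero_sub, abs_neg] at hlt
      linarith
    by_contra hcon
    push Not at hcon
    obtain ⟨hc1, hc2⟩ := hcon
    obtain ⟨t₁, ht₁, ht₁', hb₁⟩ : ∃ t : ℝ, |t| < r ∧ |t - ((n : ℝ) * ω - p)| < r ∧
        ¬ x₂ < cur hF x₁ n (θ₀ + (t : T1)) := by
      by_contra hno
      push Not at hno
      exact hc1 ⟨hlt, hno⟩
    have eα : ((-n : ℤ) : ℝ) * ω - ((-p : ℤ) : ℝ) = -((n : ℝ) * ω - p) := by push_cast; ring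
    obtain ⟨t₂, ht₂, ht₂', hb₂⟩ : ∃ t : ℝ, |t| < r ∧ |t - ((n : ℝ) * ω - p)| < r ∧
        ¬ cur hF x₂ n (θ₀ + (t : T1)) < x₁ := by
      by_contra hno
      push Not at hno
      refine hc2 ⟨by rw [eα, abs_neg]; exact hlt, fun t ht ht' => ?_⟩
      rw [eα] at ht'
      have := hno (t + ((n : ℝ) * ω - p)) (by convert ht' using 2; ring)
        (by convert ht using 2; ring)
      rw [← cur_zero hF x₁ (θ₀ + _), ← cur_shift_lt hF _ _ _ _ (-n)] at this
      have e : θ₀ + ((t + ((n : ℝ) * ω - p) : ℝ) : T1) + (-n) • (ω : T1) = θ₀ + (t : T1) := by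
        have := coe_shift ω (t + ((n : ℝ) * ω - p)) n p
        rw [add_sub_cancel_right] at this
        rw [this, neg_smul]; abel
      rw [e] at this
      simpa [cur_zero] using this
    have hd₁ := (hdis n p t₁ hn ht₁ ht₁').resolve_left hb₁
    have hd₂ := (hdis n p t₂ hn ht₂ ht₂').resolve_right hb₂
    set I : Set ℝ := {t | |t| < r ∧ |t - ((n : ℝ) * ω - p)| < r} with hI
    have hIc : IsPreconnected I := by
      have : I.OrdConnected := by
        constructor
        rintro a ⟨ha1, ha2⟩ b ⟨hb1, hb2⟩ y ⟨hy1, hy2⟩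
        rw [abs_lt] at *
        refine ⟨abs_lt.2 ⟨?_, ?_⟩, abs_lt.2 ⟨?_, ?_⟩⟩ <;> linarith
      exact this.isPreconnected
    have hcont : Continuous fun t : ℝ => cur hF x₁ n (θ₀ + (t : T1)) :=
      (cur_cont hF x₁ n).comp (continuous_const.add (AddCircle.continuous_mk' 1))
    have hlt₁ := cur_lt hF hx n (θ₀ + (t₁ : T1))
    obtain ⟨t, ⟨ht, ht'⟩, hte⟩ := hIc.intermediate_value (a := t₁) (b := t₂) ⟨ht₁, ht₁'⟩ ⟨ht₂, ht₂'⟩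
      hcont.continuousOn (show x₁ ∈ Set.Icc _ _ from ⟨by linarith, by linarith⟩)
    simp only at hte
    have hlt₂ := cur_lt hF hx n (θ₀ + (t : T1))
    rcases hdis n p t hn ht ht' with h | h <;> linarith
  have hadd : ∀ n p n' p', P n p → P n' p' →
      |((n + n' : ℤ) : ℝ) * ω - ((p + p' : ℤ) : ℝ)| < 2 * r → P (n + n') (p + p') := by
    intro n p n' p' h h' hlt
    have e : ((n + n' : ℤ) : ℝ) * ω - ((p + p' : ℤ) : ℝ)
      = ((n : ℝ) * ω - p) + ((n' : ℝ) * ω - p') := by push_cast; ring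
    obtain ⟨t, ht1, ht2, ht3⟩ := triple_overlap r _ _ h.1 h'.1 (by rw [← e]; exact hlt)
    have hθ : ∀ m q : ℤ, θ₀ + (t : T1) - m • (ω : T1) = θ₀ + ((t - ((m : ℝ) * ω - q) : ℝ) : T1) := by
      intro m q; rw [coe_shift]; abel
    have i1 := h.2 t ht1 ht2
    have i2 := Pconv (θ₀ + (t : T1)) n (n + n') p' (t - ((n : ℝ) * ω - p))
      (t - (((n : ℝ) * ω - p) + ((n' : ℝ) * ω - p'))) (hθ n p) ht2 ht3
      (by push_cast; ring) (by simpa using h')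
    have i3 := cur_lt hF hx n (θ₀ + (t : T1))
    have i4 := cur_lt hF hx (n + n') (θ₀ + (t : T1))
    by_cases hz : n + n' ≠ 0 ∨ p + p' ≠ 0
    · rcases htri _ _ hlt hz with hg | hg
      · exact hg
      · exfalso
        have := Pconv (θ₀ + (t : T1)) (n + n') 0 (-(p + p'))
          (t - (((n + n' : ℤ) : ℝ) * ω - ((p + p' : ℤ) : ℝ))) t (hθ _ _) (by rw [e]; exact ht3) ht1
          (by push_cast; ring) (by simpa using hg)
        rw [cur_zero] at this
        linarith
    · push Not at hz
      exfalso
      rw [hz.1, cur_zero] at i2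
      linarith
  have hinW : ∀ t : ℝ, |t| < r → (θ₀ + (t : T1), x₁) ∈ gapC A B ∧ (θ₀ + (t : T1), x₂) ∈ gapC A B :=
    fun t ht => ⟨hWC (hbox t _ ht le_rfl hx.le), hWC (hbox t _ ht hx.le le_rfl)⟩
  have n1 : (Set.Ioo (0 : ℝ) r).Nonempty := ⟨r / 2, by constructor <;> linarith⟩
  have n2 : (Set.Ioo (-r) (0 : ℝ)).Nonempty := ⟨-(r / 2), by constructor <;> linarith⟩
  have a1 : ∀ s ∈ Set.Ioo (0 : ℝ) r, |s| < r := fun s hs =>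
    abs_lt.2 ⟨by linarith [hs.1, hs.2], hs.2⟩
  have a2 : ∀ s ∈ Set.Ioo (-r) (0 : ℝ), |s| < r := fun s hs =>
    abs_lt.2 ⟨hs.1, by linarith [hs.1, hs.2]⟩
  have dec : ∀ (θ : T1) (n m : ℤ) (s s' : ℝ), θ - n • (ω : T1) = θ₀ + (s : T1) →
      θ - m • (ω : T1) = θ₀ + (s' : T1) → |s| < r → |s'| < r → s ≠ s' →
      (∀ p : ℤ, ((m - n : ℤ) : ℝ) * ω - p = s - s' → ¬ P (-(m - n)) (-p)) →
      cur hF x₂ n θ < cur hF x₁ m θ := by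
    intro θ n m s s' h h' hs hs' hne hnot
    obtain ⟨p, hp⟩ := exists_shift ω s s' θ θ₀ n m h h'
    refine Pconv θ n m p s s' h hs hs' hp ?_
    refine (htri (m - n) p ?_ ?_).resolve_right (hnot p hp)
    · rw [hp]
      rw [abs_lt] at *
      constructor <;> linarith
    · by_contra hz
      push Not at hz
      rw [hz.1, hz.2] at hp
      simp at hp
      exact hne (by linarith)
  have enegα : ∀ n p : ℤ, ((-n : ℤ) : ℝ) * ω - ((-p : ℤ) : ℝ) = -((n : ℝ) * ω - p) := by
    intro n p; push_cast; ring
  rcases comb ω (2 * r) hω (by linarith) (by linarith) P h0 (fun n p h => h.1) hadd htri with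
    hpos | hneg | ⟨R', hR', hR'r, N, hN, hup | hdown⟩
  · exfalso
    refine strip_case hω hF hAs hBs hgap x₁ x₂ _ _ (isOpen_arc θ₀ 0 r) (isOpen_arc θ₀ (-r) 0)
      (n1.image _) (n2.image _) ?_ ?_ ?_
    · rintro _ ⟨s, hs, rfl⟩; exact (hinW s (a1 s hs)).2
    · rintro _ ⟨s, hs, rfl⟩; exact (hinW s (a2 s hs)).1
    · rintro θ n m ⟨s, hs, h⟩ ⟨s', hs', h'⟩
      refine dec θ n m s s' h.symm h'.symm (a1 s hs) (a2 s' hs') (by linarith [hs.1, hs'.2] |> fun (h : s' < s) => h.ne') ?_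
      intro p hp hPP
      have := hpos _ _ hPP
      rw [enegα, hp] at this
      linarith [hs.1, hs'.2]
  · exfalso
    refine strip_case hω hF hAs hBs hgap x₁ x₂ _ _ (isOpen_arc θ₀ (-r) 0) (isOpen_arc θ₀ 0 r)
      (n2.image _) (n1.image _) ?_ ?_ ?_
    · rintro _ ⟨s, hs, rfl⟩; exact (hinW s (a2 s hs)).2
    · rintro _ ⟨s, hs, rfl⟩; exact (hinW s (a1 s hs)).1
    · rintro θ n m ⟨s, hs, h⟩ ⟨s', hs', h'⟩
      have hlt : s < s' := by linarith [hs.2, hs'.1]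
      refine dec θ n m s s' h.symm h'.symm (a2 s hs) (a1 s' hs') hlt.ne ?_
      intro p hp hPP
      have := hneg _ _ hPP
      rw [enegα, hp] at this
      linarith [hs.1, hs'.2]
  · have n3 : (Set.Ioo (-(R' / 2)) (R' / 2)).Nonempty := ⟨0, by constructor <;> linarith⟩
    have a3 : ∀ s ∈ Set.Ioo (-(R' / 2)) (R' / 2), |s| < r := fun s hs =>
      abs_lt.2 ⟨by linarith [hs.1], by linarith [hs.2]⟩
    obtain ⟨γ, hγ, hγC, K, hK, hlt⟩ := curve_case_up hω hF hAs hBs x₁ x₂ hx _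
      (isOpen_arc θ₀ (-(R' / 2)) (R' / 2)) (n3.image _)
      (by rintro _ ⟨s, hs, rfl⟩; exact hinW s (a3 s hs)) N hN
      (by
        rintro θ k n ⟨s, hs, h⟩ ⟨s', hs', h'⟩ hkn
        obtain ⟨p, hp⟩ := exists_shift ω s s' θ θ₀ k n h.symm h'.symm
        refine Pconv θ k n p s s' h.symm (a3 s hs) (a3 s' hs') hp (hup _ _ (by omega) ?_)
        rw [hp, abs_lt]
        constructor <;> linarith [hs.1, hs.2, hs'.1, hs'.2])
    exact ⟨γ, hγ, hγC, K, hK, Or.inl hlt⟩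
  · have n3 : (Set.Ioo (-(R' / 2)) (R' / 2)).Nonempty := ⟨0, by constructor <;> linarith⟩
    have a3 : ∀ s ∈ Set.Ioo (-(R' / 2)) (R' / 2), |s| < r := fun s hs =>
      abs_lt.2 ⟨by linarith [hs.1], by linarith [hs.2]⟩
    obtain ⟨γ, hγ, hγC, K, hK, hlt⟩ := curve_case_down hω hF hAs hBs x₁ x₂ hx _
      (isOpen_arc θ₀ (-(R' / 2)) (R' / 2)) (n3.image _)
      (by rintro _ ⟨s, hs, rfl⟩; exact hinW s (a3 s hs)) N hN
      (by
        rintro θ k n ⟨s, hs, h⟩ ⟨s', hs', h'⟩ hkn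
        obtain ⟨p, hp⟩ := exists_shift ω s s' θ θ₀ k n h.symm h'.symm
        have hPP := hdown (n - k) p (by omega) (by
          rw [hp, abs_lt]
          constructor <;> linarith [hs.1, hs.2, hs'.1, hs'.2])
        refine Pconv θ n k (-p) s' s h'.symm (a3 s' hs') (a3 s hs) ?_ ?_
        · have := enegα (n - k) p
          rw [hp] at this
          push_cast at this ⊢
          linarith
        · rwa [neg_sub] at hPP)
    exact ⟨γ, hγ, hγC, K, hK, Or.inr hlt⟩
end
end
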